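/- arXiv:1407.2171 — 2 statements merged into one kernel-verified Lean document; each statement's English description precedes it below -/
import Mathlib

section
/- Let H_ω be a weighted analytic Hilbert space and let φ be an analytic self-map of the unit disk D which is a symbol for H_ω and satisfies ‖φ‖_∞ < 1. Then β⁺(C_φ) := limsup_{n→∞} [a_n(C_φ)]^{1/n} ≤ e^{−1/capa(K)}, where K is the closure of φ(D) and capa(K) is its Green capacity in D. -/
/-!
Write `E` for the closure of `φ(D)` and `d` for the pseudo-hyperbolic distance `pseudoDist`, so that
the Green function is `-log d`. Approximation numbers are bounded by the norm of `C_φ` on the space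
of functions vanishing at `n` chosen points (`approxNumber_le_of_ker`). Such a function is a
Blaschke product `B` times an analytic function, so by the maximum principle on a circle of radius
`s < 1` it is bounded on compact subsets by `|B|` times its norm, up to a factor `κ⁻ⁿ` where `κ → 1`
as `s → 1` (`norm_le_of_zeros`, with the evaluation bound `exists_eval_bound`). To control the
norm of `f ∘ φ` in `H_ω` one needs both `f` and `f'` on `E` (`hwNormSq_comp_le`); Cauchy's estimate
reduces this to `f` on a thickening of `E` of width `ε n` of order `1/n`, at polynomial cost.

The points are Fekete points of the thickening, i.e. they maximize the product of mutual
pseudo-hyperbolic distances. Moving one point of a maximizing configuration shows that `|B|ⁿ` is at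
most this product (`exists_fekete`). The product is eventually at most `exp (-V n²)` for every
`V < V(E)` (`eventually_pdProd_le`): otherwise a weak limit of the normalized counting measures would
be a probability measure carried by `E` (since `ε n → 0`) with energy at most `V`. Here
compactness of the space of probability measures on a closed disk is used, and the kernel is
truncated to be continuous, the truncation being removed by monotone convergence. Altogether
`a_{n+1}(C_φ) ≤ C (n + 1) (κ⁻¹ exp (-V))ⁿ` for large `n`, and then `κ → 1` and `V → V(E)`.
-/

open MeasureTheory Set Filter
open scoped ENNReal NNReal

noncomputable section

/-- The open unit disk in the complex plane. -/
def unitDisk : Set ℂ := {z : ℂ | ‖z‖ < 1}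

/-- The Green function of the unit disk, `g(z,w) = log |(1 - w̄ z)/(z - w)|`,
with value `⊤` on the diagonal. -/
def greenFnE (z w : ℂ) : ℝ≥0∞ :=
  if z = w then ⊤ else ENNReal.ofReal (Real.log ‖(1 - (starRingEnd ℂ) w * z) / (z - w)‖)

/-- The Green energy `I(μ) = ∬ g(z,w) dμ(z) dμ(w)` of a measure. -/
def greenEnergy (μ : Measure ℂ) : ℝ≥0∞ := ∫⁻ z, ∫⁻ w, greenFnE z w ∂μ ∂μ

/-- `greenV E = V(E)`: the infimum of energies of probability measures supported by a
compact subset of `E`. -/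
def greenV (E : Set ℂ) : ℝ≥0∞ :=
  ⨅ (μ : Measure ℂ) (_ : IsProbabilityMeasure μ)
    (_ : ∃ K : Set ℂ, K ⊆ E ∧ IsCompact K ∧ μ Kᶜ = 0), greenEnergy μ

/-- The Green capacity `capa(E) = 1/V(E)` of `E` in the unit disk. -/
def greenCapa (E : Set ℂ) : ℝ≥0∞ := (greenV E)⁻¹

/-- `e^{-1/capa(E)} = e^{-V(E)}`, with the value `0` when `V(E) = ∞` (i.e. `capa(E) = 0`). -/
def expNegV (E : Set ℂ) : ℝ :=
  if greenV E = ⊤ then 0 else Real.exp (-(greenV E).toReal)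

/-- The pseudo-hyperbolic distance on the unit disk. -/
def pseudoDist (z w : ℂ) : ℝ := ‖(z - w) / (1 - (starRingEnd ℂ) z * w)‖

/-- The pseudo-hyperbolic diameter of a set. -/
def pseudoDiam (E : Set ℂ) : ℝ :=
  sSup {d : ℝ | ∃ z ∈ E, ∃ w ∈ E, d = pseudoDist z w}

/-- The `n`-th approximation number `a_n(T) = inf {‖T - R‖ : rank R < n}`. -/
def approxNumber {E F : Type*} [NormedAddCommGroup E] [NormedAddCommGroup F]
    [NormedSpace ℂ E] [NormedSpace ℂ F] (T : E →L[ℂ] F) (n : ℕ) : ℝ :=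
  sInf {c : ℝ | ∃ R : E →L[ℂ] F,
    Module.rank ℂ (LinearMap.range (R : E →ₗ[ℂ] F)) < (n : Cardinal) ∧ c = ‖T - R‖}

/-- The squared norm `‖f‖² = |f(0)|² + ∫_D |f'|² ω dA` (normalized area measure) of the
weighted analytic Hilbert space `H_ω`. -/
def hwNormSq (ω : ℝ → ℝ) (f : ℂ → ℂ) : ℝ :=
  ‖f 0‖ ^ 2 + (∫ z in unitDisk, ‖deriv f z‖ ^ 2 * ω ‖z‖) / Real.pi

/-- Membership in the weighted analytic Hilbert space `H_ω`. -/
def memHw (ω : ℝ → ℝ) (f : ℂ → ℂ) : Prop :=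
  DifferentiableOn ℂ f unitDisk ∧
    IntegrableOn (fun z => ‖deriv f z‖ ^ 2 * ω ‖z‖) unitDisk

/-- The coefficient weights `w_0 = 1`, `w_n = 2 n² ∫_0^1 r^{2n-1} ω(r) dr`. -/
def wcoef (ω : ℝ → ℝ) (n : ℕ) : ℝ :=
  if n = 0 then 1 else 2 * (n : ℝ) ^ 2 * ∫ r in (0:ℝ)..1, r ^ (2 * n - 1) * ω r

/-- Taylor coefficient of `f` at `0`. -/
def taylorCoeff (f : ℂ → ℂ) (n : ℕ) : ℂ := iteratedDeriv n f 0 / (n.factorial : ℂ)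

/-- `(1/2π) ∫_0^{2π} |f(r e^{it})|^p dt`. -/
def hpMean (p : ℝ) (f : ℂ → ℂ) (r : ℝ) : ℝ :=
  (1 / (2 * Real.pi)) *
    ∫ t in (0:ℝ)..(2 * Real.pi), ‖f ((r : ℂ) * Complex.exp ((t : ℂ) * Complex.I))‖ ^ p

/-- The `H^p` norm. -/
def hpNorm (p : ℝ) (f : ℂ → ℂ) : ℝ :=
  sSup {m : ℝ | ∃ r ∈ Set.Ioo (0:ℝ) 1, m = hpMean p f r ^ (1 / p)}

/-- Membership in the Hardy space `H^p`. -/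
def memHp (p : ℝ) (f : ℂ → ℂ) : Prop :=
  DifferentiableOn ℂ f unitDisk ∧
    BddAbove {m : ℝ | ∃ r ∈ Set.Ioo (0:ℝ) 1, m = hpMean p f r ^ (1 / p)}

/-- The squared `H²` norm `‖f‖² = Σ |b_n|²` in terms of Taylor coefficients. -/
def h2NormSq (f : ℂ → ℂ) : ℝ := ∑' n : ℕ, ‖taylorCoeff f n‖ ^ 2

/-- Membership in the Hardy space `H²`. -/
def memH2 (f : ℂ → ℂ) : Prop :=
  DifferentiableOn ℂ f unitDisk ∧ Summable (fun n : ℕ => ‖taylorCoeff f n‖ ^ 2)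

/-- The `n`-th Kolmogorov number. -/
def kolmogorovNumber {E F : Type*} [NormedAddCommGroup E] [NormedAddCommGroup F]
    [NormedSpace ℂ E] [NormedSpace ℂ F] (T : E →L[ℂ] F) (n : ℕ) : ℝ :=
  ⨅ (S : Submodule ℂ F) (_ : Module.rank ℂ S < (n : Cardinal)),
    ⨆ x : {x : E // ‖x‖ ≤ 1}, Metric.infDist (T (x : E)) (S : Set F)

/-- The `n`-th Gelfand number: infimum of norms of restrictions of `T` to closed
subspaces of codimension `< n`. -/
def gelfandNumber {X : Type*} [NormedAddCommGroup X] [NormedSpace ℂ X]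
    (T : X →L[ℂ] X) (n : ℕ) : ℝ :=
  ⨅ (F : Submodule ℂ X) (_ : IsClosed (F : Set X))
    (_ : Module.rank ℂ (X ⧸ F) < (n : Cardinal)),
    ⨆ x : {x : X // x ∈ F ∧ ‖x‖ ≤ 1}, ‖T (x : X)‖

/-- `ε_n(T) = inf_{dim E < n} sup_{x ∈ B_X} dist (T x, T(E))`. -/
def epsApprox {X : Type*} [NormedAddCommGroup X] [NormedSpace ℂ X]
    (T : X →L[ℂ] X) (n : ℕ) : ℝ :=
  ⨅ (E : Submodule ℂ X) (_ : Module.rank ℂ E < (n : Cardinal)),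
    ⨆ x : {x : X // ‖x‖ ≤ 1}, Metric.infDist (T (x : X)) (T '' (E : Set X))


/-! ### Pseudo-hyperbolic distance -/

/-- The identity behind `d(z,w) ≤ 1` and the lower bound of `d` near the unit circle. -/
lemma normSq_one_sub (z w : ℂ) : ‖1 - (starRingEnd ℂ) w * z‖ ^ 2 - ‖z - w‖ ^ 2
    = (1 - ‖z‖ ^ 2) * (1 - ‖w‖ ^ 2) := by
  simp only [← Complex.normSq_eq_norm_sq, Complex.normSq_apply]
  simp
  ring

lemma pseudoDist_eq (z w : ℂ) : pseudoDist z w = ‖z - w‖ / ‖1 - (starRingEnd ℂ) w * z‖ := by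
  unfold pseudoDist
  rw [norm_div]
  congr 1
  rw [← Complex.norm_conj]
  simp [mul_comm]

lemma pseudoDist_comm (z w : ℂ) : pseudoDist z w = pseudoDist w z := by
  rw [pseudoDist_eq w z, pseudoDist, norm_div, norm_sub_rev z w]

lemma pseudoDist_nonneg (z w : ℂ) : 0 ≤ pseudoDist z w := norm_nonneg _

lemma one_sub_conj_mul_ne {z w : ℂ} (hz : ‖z‖ < 1) (hw : ‖w‖ < 1) :
    1 - (starRingEnd ℂ) w * z ≠ 0 := by
  intro h
  have h1 : (starRingEnd ℂ) w * z = 1 := (sub_eq_zero.mp h).symm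
  have h2 : ‖w‖ * ‖z‖ = 1 := by
    rw [← Complex.norm_conj w, ← norm_mul, h1, norm_one]
  nlinarith [norm_nonneg z, norm_nonneg w]

lemma pseudoDist_le_one {z w : ℂ} (hz : ‖z‖ < 1) (hw : ‖w‖ < 1) : pseudoDist z w ≤ 1 := by
  rw [pseudoDist_eq, div_le_one (norm_pos_iff.mpr (one_sub_conj_mul_ne hz hw))]
  have h := normSq_one_sub z w
  have h1 : 0 ≤ (1 - ‖z‖ ^ 2) * (1 - ‖w‖ ^ 2) :=
    mul_nonneg (by nlinarith [norm_nonneg z]) (by nlinarith [norm_nonneg w])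
  exact abs_le_of_sq_le_sq' (by linarith) (norm_nonneg _) |>.2

lemma pseudoDist_pos {z w : ℂ} (hz : ‖z‖ < 1) (hw : ‖w‖ < 1) (h : z ≠ w) :
    0 < pseudoDist z w := by
  rw [pseudoDist_eq]
  exact div_pos (norm_pos_iff.mpr (sub_ne_zero.mpr h))
    (norm_pos_iff.mpr (one_sub_conj_mul_ne hz hw))

lemma continuous_pseudoDist_subtype {r : ℝ} (hr : r < 1) :
    Continuous fun p : Metric.closedBall (0:ℂ) r × Metric.closedBall (0:ℂ) r =>
      pseudoDist (p.1 : ℂ) (p.2 : ℂ) := by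
  unfold pseudoDist
  refine Continuous.norm (Continuous.div (by fun_prop) ?_ ?_)
  · exact continuous_const.sub ((Complex.continuous_conj.comp (by fun_prop)).mul (by fun_prop))
  · rintro ⟨⟨a, ha⟩, ⟨b, hb⟩⟩
    rw [mem_closedBall_zero_iff] at ha hb
    exact one_sub_conj_mul_ne (hb.trans_lt hr) (ha.trans_lt hr)

/-! ### Truncated Green kernel and energy -/

/-- The Green kernel truncated at height `M`, i.e. `min (g(z,w)) M`, with value `M`
on the diagonal. -/
def truncGreen (M : ℕ) (z w : ℂ) : ℝ := -Real.log (max (Real.exp (-(M:ℝ))) (pseudoDist z w))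

lemma truncGreen_nonneg {M : ℕ} {z w : ℂ} (hz : ‖z‖ < 1) (hw : ‖w‖ < 1) :
    0 ≤ truncGreen M z w := by
  unfold truncGreen
  rw [neg_nonneg]
  refine Real.log_nonpos (le_max_of_le_left (Real.exp_pos _).le) (max_le ?_ (pseudoDist_le_one hz hw))
  rw [Real.exp_le_one_iff]
  simp

lemma truncGreen_le (M : ℕ) (z w : ℂ) : truncGreen M z w ≤ M := by
  unfold truncGreen
  have := Real.log_le_log (Real.exp_pos _) (le_max_left (Real.exp (-(M:ℝ))) (pseudoDist z w))
  rw [Real.log_exp] at this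
  linarith

lemma truncGreen_le_neg_log (M : ℕ) {z w : ℂ} (h : 0 < pseudoDist z w) :
    truncGreen M z w ≤ -Real.log (pseudoDist z w) := by
  unfold truncGreen
  exact neg_le_neg (Real.log_le_log h (le_max_right _ _))

lemma truncGreen_mono (z w : ℂ) : Monotone fun M : ℕ => truncGreen M z w := by
  intro M N h
  unfold truncGreen
  refine neg_le_neg (Real.log_le_log (lt_max_of_lt_left (Real.exp_pos _)) ?_)
  refine max_le_max_right _ (Real.exp_le_exp.mpr ?_)
  have : (M:ℝ) ≤ N := by exact_mod_cast h
  linarith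

lemma continuous_truncGreen {r : ℝ} (hr : r < 1) (M : ℕ) :
    Continuous fun p : Metric.closedBall (0:ℂ) r × Metric.closedBall (0:ℂ) r =>
      truncGreen M (p.1 : ℂ) (p.2 : ℂ) := by
  unfold truncGreen
  refine (Continuous.log (continuous_const.max (continuous_pseudoDist_subtype hr)) ?_).neg
  intro p
  exact (lt_max_of_lt_left (Real.exp_pos _)).ne'

lemma greenFnE_eq_iSup {z w : ℂ} (hz : ‖z‖ < 1) (hw : ‖w‖ < 1) :
    greenFnE z w = ⨆ M : ℕ, ENNReal.ofReal (truncGreen M z w) := by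
  unfold greenFnE
  split_ifs with h
  · subst h
    symm
    refine ENNReal.eq_top_of_forall_nnreal_le fun c => ?_
    obtain ⟨M, hM⟩ := exists_nat_gt (c:ℝ)
    refine le_trans ?_ (le_iSup _ M)
    have : truncGreen M z z = M := by
      unfold truncGreen pseudoDist
      simp [max_eq_left (Real.exp_pos _).le]
    rw [this]
    rw [ENNReal.ofReal_natCast]
    exact_mod_cast hM.le
  · have hp := pseudoDist_pos hz hw h
    have e : Real.log ‖(1 - (starRingEnd ℂ) w * z) / (z - w)‖ = -Real.log (pseudoDist z w) := by
      rw [pseudoDist_eq, ← Real.log_inv, inv_div, norm_div]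
    rw [e]
    apply le_antisymm
    · obtain ⟨M, hM⟩ := exists_nat_gt (-Real.log (pseudoDist z w))
      refine le_trans (le_of_eq ?_) (le_iSup _ M)
      congr 1
      unfold truncGreen
      rw [max_eq_right]
      rw [← Real.le_log_iff_exp_le hp]
      linarith
    · exact iSup_le fun M => ENNReal.ofReal_le_ofReal (truncGreen_le_neg_log M hp)

/-- The empirical measure of a finite configuration, and integration against it and its square. -/
lemma exists_empirical {X : Type*} [TopologicalSpace X] [CompactSpace X]
    [SecondCountableTopology X] [MeasurableSpace X] [BorelSpace X]
    {n : ℕ} (hn : 0 < n) (x : Fin n → X) :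
    ∃ ν : ProbabilityMeasure X,
      (∀ f : C(X, ℝ), ∫ a, f a ∂(ν : Measure X) = (n:ℝ)⁻¹ * ∑ i, f (x i)) ∧
      (∀ f : C(X × X, ℝ), ∫ a, f a ∂((ν : Measure X).prod (ν : Measure X))
        = (n:ℝ)⁻¹ * ∑ i, (n:ℝ)⁻¹ * ∑ k, f (x i, x k)) := by
  have hn0 : (n : ℝ≥0∞) ≠ 0 := by exact_mod_cast hn.ne'
  let m : Measure X := (n : ℝ≥0∞)⁻¹ • ∑ i, Measure.dirac (x i)
  have hm : IsProbabilityMeasure m := by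
    constructor
    simp [m]
    exact ENNReal.inv_mul_cancel hn0 (by simp)
  have key : ∀ f : C(X, ℝ), ∫ a, f a ∂m = (n:ℝ)⁻¹ * ∑ i, f (x i) := by
    intro f
    have hf : ∀ (ν : Measure X) [IsFiniteMeasure ν], Integrable f ν := fun ν _ =>
      (BoundedContinuousFunction.mkOfCompact f).integrable ν
    simp only [m]
    rw [integral_smul_measure, integral_finsetSum_measure (fun i _ => hf _)]
    simp [integral_dirac' _ _ f.continuous.stronglyMeasurable]
  refine ⟨⟨m, hm⟩, key, fun f => ?_⟩
  change ∫ a, f a ∂(m.prod m) = _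
  have hfi : Integrable f (m.prod m) := (BoundedContinuousFunction.mkOfCompact f).integrable _
  rw [integral_prod _ hfi]
  have h1 : ∀ a, ∫ b, f (a, b) ∂m = (n:ℝ)⁻¹ * ∑ k, f (a, x k) := fun a =>
    key ⟨fun b => f (a, b), by fun_prop⟩
  simp_rw [h1]
  exact key ⟨fun a => (n:ℝ)⁻¹ * ∑ k, f (a, x k), by fun_prop⟩

/-- The energy is the supremum of the truncated energies, by monotone convergence. -/
lemma greenEnergy_le_of_trunc {r V : ℝ} (hr : r < 1)
    (μ : ProbabilityMeasure (Metric.closedBall (0:ℂ) r))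
    (h : ∀ M : ℕ, ∫ p, truncGreen M (p.1 : ℂ) (p.2 : ℂ)
      ∂((μ : Measure (Metric.closedBall (0:ℂ) r)).prod
        (μ : Measure (Metric.closedBall (0:ℂ) r))) ≤ V) :
    greenEnergy ((μ : Measure (Metric.closedBall (0:ℂ) r)).map Subtype.val) ≤ ENNReal.ofReal V := by
  have hlt : ∀ a : Metric.closedBall (0:ℂ) r, ‖(a:ℂ)‖ < 1 := fun a =>
    (mem_closedBall_zero_iff.mp a.2).trans_lt hr
  have hemb : MeasurableEmbedding (Subtype.val : Metric.closedBall (0:ℂ) r → ℂ) :=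
    MeasurableEmbedding.subtype_coe Metric.isClosed_closedBall.measurableSet
  have hcont := fun M => continuous_truncGreen hr M
  have hmeas : ∀ M : ℕ, Measurable fun p : Metric.closedBall (0:ℂ) r × Metric.closedBall (0:ℂ) r =>
      ENNReal.ofReal (truncGreen M (p.1 : ℂ) (p.2 : ℂ)) := fun M =>
    ENNReal.measurable_ofReal.comp (hcont M).measurable
  have hmono : ∀ z w : ℂ, Monotone fun M : ℕ => ENNReal.ofReal (truncGreen M z w) :=
    fun z w _ _ hMN => ENNReal.ofReal_le_ofReal (truncGreen_mono z w hMN)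
  have e : greenEnergy ((μ : Measure (Metric.closedBall (0:ℂ) r)).map Subtype.val)
      = ∫⁻ p, ⨆ M : ℕ, ENNReal.ofReal (truncGreen M (p.1 : ℂ) (p.2 : ℂ))
        ∂((μ : Measure (Metric.closedBall (0:ℂ) r)).prod
          (μ : Measure (Metric.closedBall (0:ℂ) r))) := by
    unfold greenEnergy
    rw [hemb.lintegral_map, lintegral_prod _ (Measurable.iSup hmeas).aemeasurable]
    refine lintegral_congr fun a => ?_
    rw [hemb.lintegral_map]
    exact lintegral_congr fun b => greenFnE_eq_iSup (hlt a) (hlt b)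
  rw [e, lintegral_iSup hmeas (fun M N h p => hmono _ _ h)]
  refine iSup_le fun M => ?_
  rw [← ofReal_integral_eq_lintegral_ofReal]
  · exact ENNReal.ofReal_le_ofReal (h M)
  · exact (BoundedContinuousFunction.mkOfCompact
      (⟨_, hcont M⟩ : C(Metric.closedBall (0:ℂ) r × Metric.closedBall (0:ℂ) r, ℝ))).integrable _
  · exact Eventually.of_forall fun p => truncGreen_nonneg (hlt _) (hlt _)

/-! ### Energy of discrete configurations -/

/-- The product of all pseudo-hyperbolic distances between the entries of a configuration,
over ordered pairs of distinct indices. -/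
def pdProd {n : ℕ} (z : Fin n → ℂ) : ℝ :=
  ∏ i, ∏ k ∈ Finset.univ.erase i, pseudoDist (z i) (z k)

lemma pdProd_nonneg {n : ℕ} (z : Fin n → ℂ) : 0 ≤ pdProd z :=
  Finset.prod_nonneg fun _ _ => Finset.prod_nonneg fun _ _ => pseudoDist_nonneg _ _

/-- The truncated energy of a configuration, including the `n` diagonal terms, each at most `M`. -/
lemma sum_truncGreen_le {n : ℕ} {z : Fin n → ℂ} {V : ℝ} (M : ℕ)
    (h : Real.exp (-V * (n:ℝ) ^ 2) < pdProd z) :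
    ∑ i, ∑ k, truncGreen M (z i) (z k) ≤ V * (n:ℝ) ^ 2 + n * M := by
  have hpos : 0 < pdProd z := (Real.exp_pos _).trans h
  have hne : ∀ i, ∀ k ∈ Finset.univ.erase i, pseudoDist (z i) (z k) ≠ 0 := by
    intro i k hk h0
    refine hpos.ne' ?_
    exact Finset.prod_eq_zero (Finset.mem_univ i) (Finset.prod_eq_zero hk h0)
  have hlog : Real.log (pdProd z)
      = ∑ i, ∑ k ∈ Finset.univ.erase i, Real.log (pseudoDist (z i) (z k)) := by
    unfold pdProd
    rw [Real.log_prod (fun i _ => Finset.prod_ne_zero_iff.mpr (hne i))]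
    exact Finset.sum_congr rfl fun i _ => Real.log_prod (hne i)
  have h1 : -V * (n:ℝ) ^ 2 < Real.log (pdProd z) := (Real.lt_log_iff_exp_lt hpos).mpr h
  have h2 : ∀ i, ∑ k, truncGreen M (z i) (z k)
      ≤ M + ∑ k ∈ Finset.univ.erase i, -Real.log (pseudoDist (z i) (z k)) := by
    intro i
    rw [← Finset.add_sum_erase _ _ (Finset.mem_univ i)]
    refine add_le_add (truncGreen_le _ _ _) (Finset.sum_le_sum fun k hk => ?_)
    exact truncGreen_le_neg_log M (lt_of_le_of_ne (pseudoDist_nonneg _ _) (hne i k hk).symm)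
  refine (Finset.sum_le_sum fun i _ => h2 i).trans ?_
  rw [Finset.sum_add_distrib]
  simp only [Finset.sum_neg_distrib, Finset.sum_const, Finset.card_univ, Fintype.card_fin,
    nsmul_eq_mul]
  rw [← hlog]
  linarith

/-- Energy lower bound for discrete configurations. If it failed, a weak limit of the empirical
measures would be a probability measure on `E` of energy at most `V < V(E)`. -/
lemma eventually_pdProd_le {E : Set ℂ} (hE : IsCompact E) (hEne : E.Nonempty) {r : ℝ} (hr : r < 1)
    (hEr : E ⊆ Metric.closedBall 0 r)
    {V : ℝ} (hV : ENNReal.ofReal V < greenV E) {S : ℕ → Set ℂ} {ε : ℕ → ℝ}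
    (hε : Tendsto ε atTop (nhds 0)) (hS : ∀ n, S n ⊆ Metric.closedBall 0 r)
    (hSε : ∀ n, ∀ z ∈ S n, Metric.infDist z E ≤ ε n) :
    ∀ᶠ n : ℕ in atTop, ∀ z : Fin n → ℂ, (∀ i, z i ∈ S n) →
      pdProd z ≤ Real.exp (-V * (n:ℝ) ^ 2) := by
  let X := Metric.closedBall (0:ℂ) r
  have : CompactSpace X := isCompact_iff_compactSpace.mp (isCompact_closedBall _ _)
  let kf : ℕ → C(X × X, ℝ) := fun M => ⟨_, continuous_truncGreen hr M⟩
  let df : C(X, ℝ) := ⟨fun a => Metric.infDist (a:ℂ) E, by fun_prop⟩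
  by_contra hcon
  have hfreq := (not_eventually.mp hcon).and_eventually (eventually_gt_atTop 0)
  let P : ℕ → Prop := fun n => ∃ ν : ProbabilityMeasure X,
      ∫ a, df a ∂(ν : Measure X) ≤ ε n ∧
      ∀ M : ℕ, ∫ p, kf M p ∂((ν : Measure X).prod (ν : Measure X)) ≤ V + M / n
  have hP : ∃ᶠ n in atTop, P n := by
    refine hfreq.mono ?_
    rintro n ⟨hn, hn0⟩
    push Not at hn
    obtain ⟨z, hz, hlt⟩ := hn
    obtain ⟨ν, h1, h2⟩ := exists_empirical hn0 (fun i => (⟨z i, hS n (hz i)⟩ : X))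
    have hn1 : (0:ℝ) < n := by exact_mod_cast hn0
    refine ⟨ν, ?_, fun M => ?_⟩
    · rw [h1, inv_mul_le_iff₀ hn1]
      refine (Finset.sum_le_card_nsmul _ _ (ε n) fun i _ => hSε n _ (hz i)).trans ?_
      simp
    · rw [h2, ← Finset.mul_sum, ← mul_assoc, ← mul_inv, inv_mul_le_iff₀ (by positivity)]
      refine (sum_truncGreen_le M hlt).trans (le_of_eq ?_)
      field_simp
  -- a weak limit of the measures `ν n` along an ultrafilter on the indices with `P n`
  let F : Filter ℕ := atTop ⊓ 𝓟 {n | P n}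
  have hF : F.NeBot := frequently_mem_iff_neBot.mp hP
  have : Nonempty (ProbabilityMeasure X) := by
    obtain ⟨e, he⟩ := hEne
    exact ⟨⟨Measure.dirac ⟨e, hEr he⟩, inferInstance⟩⟩
  choose! ν hν1 hν2 using (fun n (h : P n) => h)
  let U := Ultrafilter.of F
  have hUF : (U : Filter ℕ) ≤ F := Ultrafilter.of_le F
  have hU1 : (U : Filter ℕ) ≤ atTop := hUF.trans inf_le_left
  have hUP : ∀ᶠ n in (U : Filter ℕ), P n := (hUF.trans inf_le_right) (mem_principal_self _)
  obtain ⟨μ, -, hμ⟩ := isCompact_univ.ultrafilter_le_nhds (U.map ν) (by simp)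
  have hμ' : Tendsto ν U (nhds μ) := hμ
  have hprod : Tendsto (fun n => (ν n).prod (ν n)) U (nhds (μ.prod μ)) :=
    (ProbabilityMeasure.continuous_prod.tendsto (μ, μ)).comp (hμ'.prodMk_nhds hμ')
  have hd : ∫ a, df a ∂(μ : Measure X) ≤ 0 := by
    refine le_of_tendsto_of_tendsto
      (ProbabilityMeasure.tendsto_iff_forall_integral_tendsto.mp hμ'
        (BoundedContinuousFunction.mkOfCompact df)) (hε.mono_left hU1) ?_
    filter_upwards [hUP] with n hn using hν1 n hn
  have hk : ∀ M : ℕ, ∫ p, kf M p ∂((μ : Measure X).prod (μ : Measure X)) ≤ V := by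
    intro M
    have hlim : Tendsto (fun n : ℕ => V + (M:ℝ) / n) U (nhds V) := by
      have := (tendsto_const_div_atTop_nhds_zero_nat (M:ℝ)).mono_left hU1
      simpa using this.const_add V
    refine le_of_tendsto_of_tendsto
      (ProbabilityMeasure.tendsto_iff_forall_integral_tendsto.mp hprod
        (BoundedContinuousFunction.mkOfCompact (kf M))) hlim ?_
    filter_upwards [hUP] with n hn using hν2 n hn M
  have hen := greenEnergy_le_of_trunc hr μ hk
  have hsupp : (μ : Measure X).map Subtype.val Eᶜ = 0 := by
    rw [Measure.map_apply measurable_subtype_coe hE.isClosed.measurableSet.compl]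
    have h0 : ∫ a, df a ∂(μ : Measure X) = 0 :=
      le_antisymm hd (integral_nonneg fun a => Metric.infDist_nonneg)
    have hdi : Integrable df (μ : Measure X) :=
      (BoundedContinuousFunction.mkOfCompact df).integrable _
    have h1 := (integral_eq_zero_iff_of_nonneg (fun a => Metric.infDist_nonneg) hdi).mp h0
    refine measure_mono_null ?_ (ae_iff.mp h1)
    intro a ha h
    exact ha ((hE.isClosed.mem_iff_infDist_zero hEne).mpr h)
  refine absurd hV (not_lt.mpr (le_trans ?_ hen))
  unfold greenV
  refine iInf_le_of_le _ (iInf_le_of_le ?_ (iInf_le _ ⟨E, subset_rfl, hE, hsupp⟩))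
  exact Measure.isProbabilityMeasure_map measurable_subtype_coe.aemeasurable

/-! ### Fekete points -/

/-- The factors of `pdProd z` that involve the entry `z j`, separated from the others. -/
lemma pdProd_split {n : ℕ} (z : Fin n → ℂ) (j : Fin n) :
    pdProd z = (∏ k ∈ Finset.univ.erase j, pseudoDist (z j) (z k)) ^ 2 *
      ∏ i ∈ Finset.univ.erase j, ∏ k ∈ (Finset.univ.erase i).erase j, pseudoDist (z i) (z k) := by
  unfold pdProd
  rw [← Finset.mul_prod_erase _ _ (Finset.mem_univ j), sq, mul_assoc]
  congr 1
  rw [← Finset.prod_mul_distrib]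
  refine Finset.prod_congr rfl fun i hi => ?_
  rw [← Finset.mul_prod_erase (Finset.univ.erase i) _
    (Finset.mem_erase.mpr ⟨(Finset.ne_of_mem_erase hi).symm, Finset.mem_univ j⟩),
    pseudoDist_comm]

lemma pdProd_update {n : ℕ} (z : Fin n → ℂ) (j : Fin n) (w : ℂ) :
    pdProd (Function.update z j w) = (∏ k ∈ Finset.univ.erase j, pseudoDist w (z k)) ^ 2 *
      ∏ i ∈ Finset.univ.erase j, ∏ k ∈ (Finset.univ.erase i).erase j, pseudoDist (z i) (z k) := by
  rw [pdProd_split _ j]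
  congr 1
  · congr 1
    refine Finset.prod_congr rfl fun k hk => ?_
    rw [Function.update_self, Function.update_of_ne (Finset.ne_of_mem_erase hk)]
  · refine Finset.prod_congr rfl fun i hi => Finset.prod_congr rfl fun k hk => ?_
    rw [Function.update_of_ne (Finset.ne_of_mem_erase hi),
      Function.update_of_ne (Finset.ne_of_mem_erase hk)]

/-- Fekete points: for a configuration maximizing `pdProd`, moving any one point does not increase
the product, so the Blaschke product with these zeros is at most `pdProd z ^ (1/n)` on `S`. -/
lemma exists_fekete {S : Set ℂ} (hS : IsCompact S) (hinf : S.Infinite) {r : ℝ} (hr : r < 1)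
    (hSr : S ⊆ Metric.closedBall 0 r) (n : ℕ) :
    ∃ z : Fin n → ℂ, Function.Injective z ∧ (∀ i, z i ∈ S) ∧
      ∀ w ∈ S, (∏ k, pseudoDist w (z k)) ^ n ≤ pdProd z := by
  have hlt : ∀ w ∈ S, ‖w‖ < 1 := fun w hw => (mem_closedBall_zero_iff.mp (hSr hw)).trans_lt hr
  have hcpt : IsCompact (Set.pi Set.univ fun _ : Fin n => S) := isCompact_univ_pi fun _ => hS
  obtain ⟨y, hy, hyinj⟩ : ∃ y : Fin n → ℂ, (∀ i, y i ∈ S) ∧ Function.Injective y :=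
    ⟨fun i => hinf.natEmbedding S i, fun i => (hinf.natEmbedding S i).2, fun a b h =>
      Fin.ext ((hinf.natEmbedding S).injective (Subtype.ext h))⟩
  have hcont : ContinuousOn (pdProd (n := n)) (Set.pi Set.univ fun _ : Fin n => S) := by
    unfold pdProd
    refine continuousOn_finsetProd _ fun i _ => continuousOn_finsetProd _ fun k _ => ?_
    unfold pseudoDist
    refine ContinuousOn.norm (ContinuousOn.div (by fun_prop) (Continuous.continuousOn ?_) ?_)
    · exact continuous_const.sub ((Complex.continuous_conj.comp (by fun_prop)).mul (by fun_prop))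
    · intro z hz
      exact one_sub_conj_mul_ne (hlt _ (hz k (Set.mem_univ _))) (hlt _ (hz i (Set.mem_univ _)))
  obtain ⟨z, hz, hmax⟩ := hcpt.exists_isMaxOn ⟨y, fun i _ => hy i⟩ hcont
  have hzS : ∀ i, z i ∈ S := fun i => hz i (Set.mem_univ i)
  have hypos : 0 < pdProd y :=
    Finset.prod_pos fun i _ => Finset.prod_pos fun k hk =>
      pseudoDist_pos (hlt _ (hy i)) (hlt _ (hy k)) (hyinj.ne (Finset.ne_of_mem_erase hk).symm)
  have hzpos : 0 < pdProd z := hypos.trans_le (hmax (fun i _ => hy i))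
  refine ⟨z, ?_, hzS, fun w hw => ?_⟩
  · intro i k hik
    by_contra hne
    refine hzpos.ne' (Finset.prod_eq_zero (Finset.mem_univ i)
      (Finset.prod_eq_zero (Finset.mem_erase.mpr ⟨Ne.symm hne, Finset.mem_univ k⟩) ?_))
    rw [pseudoDist, hik]
    simp
  · have hnn : ∀ a : ℂ, ∀ s : Finset (Fin n), 0 ≤ ∏ k ∈ s, pseudoDist a (z k) := fun a s =>
      Finset.prod_nonneg fun _ _ => pseudoDist_nonneg _ _
    have hj : ∀ j, ∏ k, pseudoDist w (z k) ≤
        ∏ k ∈ Finset.univ.erase j, pseudoDist (z j) (z k) := by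
      intro j
      have h1 : pdProd (Function.update z j w) ≤ pdProd z := by
        refine hmax fun i _ => ?_
        rcases eq_or_ne i j with rfl | h
        · rwa [Function.update_self]
        · rw [Function.update_of_ne h]
          exact hzS i
      have hz2 := pdProd_split z j
      rw [pdProd_update, hz2] at h1
      have hrest : 0 < ∏ i ∈ Finset.univ.erase j, ∏ k ∈ (Finset.univ.erase i).erase j,
          pseudoDist (z i) (z k) := by
        rw [hz2] at hzpos
        exact pos_of_mul_pos_right hzpos (sq_nonneg _)
      have h2 := (sq_le_sq₀ (hnn _ _) (hnn _ _)).mp (le_of_mul_le_mul_right h1 hrest)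
      refine le_trans ?_ h2
      rw [← Finset.mul_prod_erase _ _ (Finset.mem_univ j)]
      exact mul_le_of_le_one_left (hnn _ _) (pseudoDist_le_one (hlt w hw) (hlt _ (hzS j)))
    calc (∏ k, pseudoDist w (z k)) ^ n = ∏ _j : Fin n, ∏ k, pseudoDist w (z k) := by simp
      _ ≤ pdProd z := Finset.prod_le_prod (fun j _ => hnn _ _) fun j _ => hj j

/-! ### Analytic functions with prescribed zeros -/

/-- Simple zeros can be divided out, by removable singularities. -/
lemma exists_factor {U : Set ℂ} (hU : IsOpen U) (s : Finset ℂ) :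
    ∀ f : ℂ → ℂ, DifferentiableOn ℂ f U → (∀ a ∈ s, a ∈ U ∧ f a = 0) →
      ∃ h : ℂ → ℂ, DifferentiableOn ℂ h U ∧ ∀ z, f z = (∏ a ∈ s, (z - a)) * h z := by
  induction s using Finset.induction_on with
  | empty => exact fun f hf _ => ⟨f, hf, by simp⟩
  | insert a s has ih =>
    intro f hf h0
    have haU := (h0 a (Finset.mem_insert_self a s)).1
    have hfa := (h0 a (Finset.mem_insert_self a s)).2
    have hfac : ∀ z, f z = (z - a) * dslope f a z := by
      intro z
      have := sub_smul_dslope f a z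
      rw [smul_eq_mul, hfa, sub_zero] at this
      exact this.symm
    obtain ⟨h, hh, hfh⟩ := ih (dslope f a)
      ((Complex.differentiableOn_dslope (hU.mem_nhds haU)).mpr hf) (by
        intro b hb
        refine ⟨(h0 b (Finset.mem_insert_of_mem hb)).1, ?_⟩
        have h1 := hfac b
        rw [(h0 b (Finset.mem_insert_of_mem hb)).2] at h1
        rcases mul_eq_zero.mp h1.symm with h2 | h2
        · exact absurd (sub_eq_zero.mp h2 ▸ hb) has
        · exact h2)
    refine ⟨h, hh, fun z => ?_⟩
    rw [hfac, hfh, Finset.prod_insert has, mul_assoc]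

/-- Lower bound for the pseudo-hyperbolic distance between the circle of radius `s` and the disk of
radius `r < s`; it tends to `1` as `s → 1`. -/
lemma pseudoDist_lower {r s : ℝ} (hr0 : 0 ≤ r) (hrs : r < s) (hs : s < 1) {z w : ℂ} (hz : ‖z‖ = s)
    (hw : ‖w‖ ≤ r) : (s - r) / (1 - r * s) ≤ pseudoDist z w := by
  have hrs1 : 0 < 1 - r * s := by nlinarith
  have hz1 : ‖z‖ < 1 := hz ▸ hs
  have hw1 : ‖w‖ < 1 := by linarith
  have hD := norm_pos_iff.mpr (one_sub_conj_mul_ne hz1 hw1)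
  have key := normSq_one_sub z w
  have hzw : s - r ≤ ‖z - w‖ := by
    have := norm_sub_norm_le z w
    linarith
  rw [pseudoDist_eq, div_le_div_iff₀ hrs1 hD]
  rw [hz] at key
  set D := ‖1 - (starRingEnd ℂ) w * z‖
  set N := ‖z - w‖
  have hw0 := norm_nonneg w
  have hN : 0 < N := by linarith
  have hNw : (s - ‖w‖) ^ 2 ≤ N ^ 2 := by
    have := norm_sub_norm_le z w
    rw [hz] at this
    exact pow_le_pow_left₀ (by linarith) this 2
  refine abs_le_of_sq_le_sq' ?_ (by positivity) |>.2
  set t := ‖w‖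
  -- the worst case is `‖w‖ = r` with `w` on the same ray as `z`
  have hA : (s - r) ^ 2 * (1 - t ^ 2) ≤ (s - t) ^ 2 * (1 - r ^ 2) := by
    have : (s - t) ^ 2 * (1 - r ^ 2) - (s - r) ^ 2 * (1 - t ^ 2)
      = (r - t) * ((s - t) * (1 - r * s) + (s - r) * (1 - t * s)) := by ring
    have h3 : 0 ≤ (r - t) * ((s - t) * (1 - r * s) + (s - r) * (1 - t * s)) := by
      refine mul_nonneg (by linarith) (add_nonneg (mul_nonneg (by linarith) hrs1.le)
        (mul_nonneg (by linarith) (by nlinarith)))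
    linarith
  have hB : (s - r) ^ 2 * (1 - t ^ 2) ≤ N ^ 2 * (1 - r ^ 2) :=
    hA.trans (mul_le_mul_of_nonneg_right hNw (by nlinarith))
  have hD2 : D ^ 2 = N ^ 2 + (1 - s ^ 2) * (1 - t ^ 2) := by linarith
  have hC := mul_le_mul_of_nonneg_left hB (show 0 ≤ 1 - s ^ 2 by nlinarith)
  calc ((s - r) * D) ^ 2 = (s - r) ^ 2 * N ^ 2 + (1 - s ^ 2) * ((s - r) ^ 2 * (1 - t ^ 2)) := by
        rw [mul_pow, hD2]; ring
    _ ≤ (s - r) ^ 2 * N ^ 2 + (1 - s ^ 2) * (N ^ 2 * (1 - r ^ 2)) := by linarith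
    _ = (N * (1 - r * s)) ^ 2 := by ring

/-- Schwarz-type lemma: an analytic function on the disk vanishing at `z 1, …, z n` is at most its
supremum on the circle of radius `s`, times the Blaschke product with these zeros, up to the factor
coming from the size of the Blaschke product on that circle. -/
lemma norm_le_of_zeros {r s : ℝ} (hr0 : 0 ≤ r) (hrs : r < s) (hs : s < 1) {n : ℕ}
    {z : Fin n → ℂ} (hinj : Function.Injective z) (hz : ∀ i, ‖z i‖ ≤ r) {f : ℂ → ℂ}
    (hf : DifferentiableOn ℂ f (Metric.ball 0 1)) (hf0 : ∀ i, f (z i) = 0) {A : ℝ}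
    (hA : ∀ w, ‖w‖ = s → ‖f w‖ ≤ A) {w : ℂ} (hw : ‖w‖ ≤ r) :
    ‖f w‖ ≤ A * (((s - r) / (1 - r * s))⁻¹) ^ n * ∏ k, pseudoDist w (z k) := by
  have hκ : 0 < (s - r) / (1 - r * s) := div_pos (by linarith) (by nlinarith)
  set κ := (s - r) / (1 - r * s)
  obtain ⟨h, hh, hfh⟩ := exists_factor Metric.isOpen_ball (Finset.univ.image z) f hf (by
    intro a ha
    obtain ⟨i, -, rfl⟩ := Finset.mem_image.mp ha
    exact ⟨by rw [mem_ball_zero_iff]; linarith [hz i], hf0 i⟩)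
  simp_rw [Finset.prod_image hinj.injOn] at hfh
  -- the quotient of `f` by the Blaschke product
  let F : ℂ → ℂ := fun y => h y * ∏ k, (1 - (starRingEnd ℂ) (z k) * y)
  have hF : DifferentiableOn ℂ F (Metric.ball 0 1) := by
    refine hh.mul (Differentiable.differentiableOn ?_)
    fun_prop
  have hfF : ∀ y, ‖y‖ < 1 → ‖f y‖ = ‖F y‖ * ∏ k, pseudoDist y (z k) := by
    intro y hy
    have hne : ∀ k, ‖1 - (starRingEnd ℂ) (z k) * y‖ ≠ 0 := fun k =>
      norm_ne_zero_iff.mpr (one_sub_conj_mul_ne hy (by linarith [hz k]))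
    simp only [F, hfh y, pseudoDist_eq, Finset.prod_div_distrib, norm_mul, norm_prod]
    have : ∏ k, ‖1 - (starRingEnd ℂ) (z k) * y‖ ≠ 0 := Finset.prod_ne_zero_iff.mpr fun k _ => hne k
    generalize ∏ k, ‖1 - (starRingEnd ℂ) (z k) * y‖ = D at this ⊢
    field_simp
  have hs0 : 0 < s := by linarith
  have hFw : ‖F w‖ ≤ A * (κ⁻¹) ^ n := by
    refine Complex.norm_le_of_forall_mem_frontier_norm_le (U := Metric.ball 0 s)
      Metric.isBounded_ball ?_ ?_ (subset_closure ?_)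
    · refine (hF.mono ?_).diffContOnCl
      rw [closure_ball _ hs0.ne']
      exact Metric.closedBall_subset_ball hs
    · intro y hy
      rw [frontier_ball _ hs0.ne', mem_sphere_zero_iff_norm] at hy
      have h1 : κ ^ n ≤ ∏ k, pseudoDist y (z k) := by
        calc κ ^ n = ∏ _k : Fin n, κ := by simp
          _ ≤ _ := Finset.prod_le_prod (fun _ _ => hκ.le)
            fun k _ => pseudoDist_lower hr0 hrs hs hy (hz k)
      have h2 := hfF y (hy ▸ hs)
      have h3 := hA y hy
      rw [inv_pow, ← div_eq_mul_inv, le_div_iff₀ (pow_pos hκ n)]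
      calc ‖F y‖ * κ ^ n ≤ ‖F y‖ * ∏ k, pseudoDist y (z k) := by gcongr
        _ ≤ A := h2 ▸ h3
    · rw [mem_ball_zero_iff]
      linarith
  rw [hfF w (by linarith)]
  exact mul_le_mul_of_nonneg_right hFw (Finset.prod_nonneg fun _ _ => pseudoDist_nonneg _ _)

/-! ### The weighted space -/

/-- Area mean-value inequality for analytic functions, by polar coordinates around `z`. The
integral over `(0, δ)` on the left is the area of the disk, `π δ²`. -/
lemma enorm_mul_le_lintegral_ball {G : ℂ → ℂ} {z : ℂ} {δ : ℝ}
    (hG : DifferentiableOn ℂ G (Metric.ball z δ)) :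
    ‖G z‖ₑ * ∫⁻ r in Set.Ioo 0 δ, ENNReal.ofReal r * ENNReal.ofReal (2 * Real.pi)
      ≤ ∫⁻ w in Metric.ball z δ, ‖G w‖ₑ := by
  classical
  have hmeas : Measurable ((Metric.ball z δ).indicator G) := by
    rw [← Set.piecewise_eq_indicator]
    exact hG.continuousOn.measurable_piecewise continuousOn_const
      Metric.isOpen_ball.measurableSet
  set Gt := (Metric.ball z δ).indicator G with hGt
  have hcirc : ∀ r ∈ Set.Ioo 0 δ, ENNReal.ofReal (2 * Real.pi) * ‖G z‖ₑ ≤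
      ∫⁻ θ in Set.Ioo (-Real.pi) Real.pi, ‖Gt (z + Complex.polarCoord.symm (r, θ))‖ₑ := by
    intro r hr
    have hcm : ∀ θ : ℝ, z + Complex.polarCoord.symm (r, θ) = circleMap z r θ := by
      intro θ
      rw [Complex.polarCoord_symm_apply, circleMap, Complex.exp_mul_I]
      push_cast
      ring
    have hGG : ∀ θ : ℝ, Gt (circleMap z r θ) = G (circleMap z r θ) := fun θ => by
      refine Set.indicator_of_mem ?_ _
      rw [Metric.mem_ball, dist_eq_norm, circleMap_sub_center, norm_circleMap_zero,
        abs_of_pos hr.1]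
      exact hr.2
    simp_rw [hcm, hGG]
    have hdc : DiffContOnCl ℂ G (Metric.ball z |r|) := by
      refine (hG.mono ?_).diffContOnCl
      rw [abs_of_pos hr.1, closure_ball _ hr.1.ne']
      exact Metric.closedBall_subset_ball hr.2
    have havg := hdc.circleAverage
    rw [Real.circleAverage_def] at havg
    have hper : ∫ θ in Set.Ioo (-Real.pi) Real.pi, G (circleMap z r θ)
        = ∫ θ in (0:ℝ)..(2 * Real.pi), G (circleMap z r θ) := by
      have hp : Function.Periodic (fun θ => G (circleMap z r θ)) (2 * Real.pi) :=
        fun θ => by simp only [periodic_circleMap z r θ]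
      have := hp.intervalIntegral_add_eq (-Real.pi) 0
      rw [zero_add, show -Real.pi + 2 * Real.pi = Real.pi by ring] at this
      rw [← this, intervalIntegral.integral_of_le (by linarith [Real.pi_pos]),
        integral_Ioc_eq_integral_Ioo]
    have h2 : ∫ θ in Set.Ioo (-Real.pi) Real.pi, G (circleMap z r θ)
        = ((2 * Real.pi : ℝ) : ℂ) * G z := by
      rw [hper, ← havg, Complex.real_smul, ← mul_assoc, ← Complex.ofReal_mul,
        mul_inv_cancel₀ (by positivity)]
      simp
    calc ENNReal.ofReal (2 * Real.pi) * ‖G z‖ₑ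
        = ‖∫ θ in Set.Ioo (-Real.pi) Real.pi, G (circleMap z r θ)‖ₑ := by
          rw [h2, enorm_mul, ← ofReal_norm ((2 * Real.pi : ℝ) : ℂ), Complex.norm_real,
            Real.norm_of_nonneg (by positivity)]
      _ ≤ _ := enorm_integral_le_lintegral_enorm _
  have hpol := Complex.lintegral_comp_polarCoord_symm (fun w => ‖Gt (z + w)‖ₑ)
  rw [lintegral_add_left_eq_self (fun w => ‖Gt w‖ₑ) z] at hpol
  have hind : ∫⁻ w, ‖Gt w‖ₑ = ∫⁻ w in Metric.ball z δ, ‖G w‖ₑ := by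
    rw [← lintegral_indicator Metric.isOpen_ball.measurableSet]
    refine lintegral_congr fun w => ?_
    rw [hGt, enorm_indicator_eq_indicator_enorm]
  rw [← hind, ← hpol]
  have hpm : Measurable fun p : ℝ × ℝ => z + Complex.polarCoord.symm p := by
    have : Continuous fun p : ℝ × ℝ => z + Complex.polarCoord.symm p := by
      simp only [Complex.polarCoord_symm_apply]
      fun_prop
    exact this.measurable
  have hfm : Measurable fun p : ℝ × ℝ =>
      ENNReal.ofReal p.1 • ‖Gt (z + Complex.polarCoord.symm p)‖ₑ := by
    refine (ENNReal.measurable_ofReal.comp measurable_fst).mul ?_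
    exact (hmeas.comp hpm).enorm
  rw [polarCoord_target, Measure.volume_eq_prod, ← Measure.prod_restrict,
    lintegral_prod _ hfm.aemeasurable]
  rw [← lintegral_const_mul' _ _ enorm_ne_top]
  refine le_trans ?_ (lintegral_mono_set (Set.Ioo_subset_Ioi_self : Set.Ioo 0 δ ⊆ Set.Ioi 0))
  refine setLIntegral_mono' measurableSet_Ioo fun r hr => ?_
  simp only [smul_eq_mul]
  rw [lintegral_const_mul' _ _ ENNReal.ofReal_ne_top]
  calc ‖G z‖ₑ * (ENNReal.ofReal r * ENNReal.ofReal (2 * Real.pi))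
      = ENNReal.ofReal r * (ENNReal.ofReal (2 * Real.pi) * ‖G z‖ₑ) := by ring
    _ ≤ _ := by gcongr; exact hcirc r hr

lemma unitDisk_eq : unitDisk = Metric.ball (0:ℂ) 1 := by
  ext z
  simp [unitDisk]

lemma hwNormSq_congr {ω : ℝ → ℝ} {f g : ℂ → ℂ} (h : ∀ z ∈ unitDisk, f z = g z) :
    hwNormSq ω f = hwNormSq ω g := by
  have ho : IsOpen unitDisk := unitDisk_eq ▸ Metric.isOpen_ball
  unfold hwNormSq
  rw [h 0 (by simp [unitDisk])]
  congr 2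
  refine setIntegral_congr_fun ho.measurableSet fun z hz => ?_
  have : deriv f z = deriv g z :=
    Filter.EventuallyEq.deriv_eq (eventually_of_mem (ho.mem_nhds hz) h)
  simp only [this]

/-- Derivatives are controlled by the `H_ω`-norm: `ω` is bounded below by a positive constant on
`[0, (1 + s) / 2]`, so the mean-value inequality for `(f')²` on a small disk applies. -/
lemma exists_deriv_bound {ω : ℝ → ℝ} (hω_cont : ContinuousOn ω (Set.Ico 0 1))
    (hω_pos : ∀ r ∈ Set.Ico (0:ℝ) 1, 0 < ω r) {s : ℝ} (hs0 : 0 ≤ s) (hs : s < 1) :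
    ∃ C : ℝ, 0 < C ∧ ∀ f : ℂ → ℂ, memHw ω f → ∀ z, ‖z‖ ≤ s →
      ‖deriv f z‖ ^ 2 ≤ C * ∫ w in unitDisk, ‖deriv f w‖ ^ 2 * ω ‖w‖ := by
  have hnn : ∀ r ∈ Set.Ico (0:ℝ) 1, 0 ≤ ω r := fun r hr => (hω_pos r hr).le
  set t := (1 + s) / 2 with ht
  set δ := (1 - s) / 2 with hδ
  have hδ0 : 0 < δ := by rw [hδ]; linarith
  have hsub : Set.Icc 0 t ⊆ Set.Ico (0:ℝ) 1 := fun x hx => ⟨hx.1, by linarith [hx.2]⟩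
  obtain ⟨x0, hx0, hmin⟩ := isCompact_Icc.exists_isMinOn
    (Set.nonempty_Icc.mpr (by rw [ht]; linarith)) (hω_cont.mono hsub)
  have hc := hω_pos x0 (hsub hx0)
  set c := ω x0
  have hI : ∫⁻ r in Set.Ioo 0 δ, ENNReal.ofReal r * ENNReal.ofReal (2 * Real.pi) ≠ 0 := by
    intro h0
    rw [lintegral_eq_zero_iff (by fun_prop)] at h0
    have h1 : ∀ᵐ r ∂(volume.restrict (Set.Ioo 0 δ)), False := by
      filter_upwards [h0, ae_restrict_mem measurableSet_Ioo] with r hr hr2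
      simp only [Pi.zero_apply, mul_eq_zero, ENNReal.ofReal_eq_zero] at hr
      rcases hr with h | h
      · exact absurd hr2.1 (not_lt.mpr h)
      · linarith [Real.pi_pos]
    have h2 : volume.restrict (Set.Ioo 0 δ) = 0 := by
      rw [← ae_eq_bot]
      exact eventually_false_iff_eq_bot.mp h1
    rw [Measure.restrict_eq_zero, Real.volume_Ioo, ENNReal.ofReal_eq_zero] at h2
    linarith
  have hI' : ∫⁻ r in Set.Ioo 0 δ, ENNReal.ofReal r * ENNReal.ofReal (2 * Real.pi) ≠ ⊤ := by
    refine ne_top_of_le_ne_top ?_ (setLIntegral_mono' (g := fun _ => ENNReal.ofReal δ *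
      ENNReal.ofReal (2 * Real.pi)) measurableSet_Ioo fun r hr => ?_)
    · rw [setLIntegral_const]
      exact ENNReal.mul_ne_top (ENNReal.mul_ne_top ENNReal.ofReal_ne_top ENNReal.ofReal_ne_top)
        (by simp)
    · gcongr
      exact hr.2.le
  set I := ∫⁻ r in Set.Ioo 0 δ, ENNReal.ofReal r * ENNReal.ofReal (2 * Real.pi)
  have hIr : 0 < I.toReal := ENNReal.toReal_pos hI hI'
  refine ⟨I.toReal⁻¹ * c⁻¹, by positivity, fun f hf z hz => ?_⟩
  have hball : Metric.ball z δ ⊆ Metric.ball 0 t := by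
    refine Metric.ball_subset_ball' ?_
    rw [dist_zero_right]
    linarith
  have hball1 : Metric.ball z δ ⊆ unitDisk := by
    rw [unitDisk_eq]
    exact hball.trans (Metric.ball_subset_ball (by linarith))
  have ho : IsOpen unitDisk := unitDisk_eq ▸ Metric.isOpen_ball
  have hd : DifferentiableOn ℂ (fun w => deriv f w ^ 2) (Metric.ball z δ) :=
    ((hf.1.deriv ho).pow 2).mono hball1
  have h1 := enorm_mul_le_lintegral_ball hd
  have h2 : ∫⁻ w in Metric.ball z δ, ‖deriv f w ^ 2‖ₑ
      ≤ ENNReal.ofReal (c⁻¹ * ∫ w in unitDisk, ‖deriv f w‖ ^ 2 * ω ‖w‖) := by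
    rw [← integral_const_mul, ofReal_integral_eq_lintegral_ofReal (hf.2.const_mul _)]
    · refine le_trans ?_ (lintegral_mono_set hball1)
      refine setLIntegral_mono' Metric.isOpen_ball.measurableSet fun w hw => ?_
      rw [← ofReal_norm, norm_pow]
      refine ENNReal.ofReal_le_ofReal ?_
      have hw1 : c ≤ ω ‖w‖ := hmin ⟨norm_nonneg _, (mem_ball_zero_iff.mp (hball hw)).le⟩
      rw [le_inv_mul_iff₀ hc, mul_comm]
      gcongr
    · filter_upwards [ae_restrict_mem ho.measurableSet] with w hw
      have := hnn ‖w‖ ⟨norm_nonneg _, hw⟩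
      simp only [Pi.zero_apply]
      positivity
  have h3 := h1.trans h2
  have hJ : 0 ≤ ∫ w in unitDisk, ‖deriv f w‖ ^ 2 * ω ‖w‖ :=
    setIntegral_nonneg ho.measurableSet fun w hw =>
      mul_nonneg (sq_nonneg _) (hnn _ ⟨norm_nonneg _, hw⟩)
  have h4 := ENNReal.toReal_mono ENNReal.ofReal_ne_top h3
  rw [ENNReal.toReal_mul, ENNReal.toReal_ofReal (by positivity), toReal_enorm, norm_pow] at h4
  rw [mul_assoc, le_inv_mul_iff₀ hIr]
  linarith

/-- Point evaluations are bounded on `H_ω`, uniformly on smaller disks. -/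
lemma exists_eval_bound {ω : ℝ → ℝ} (hω_cont : ContinuousOn ω (Set.Ico 0 1))
    (hω_pos : ∀ r ∈ Set.Ico (0:ℝ) 1, 0 < ω r) {s : ℝ} (hs0 : 0 ≤ s) (hs : s < 1) :
    ∃ C : ℝ, 0 ≤ C ∧ ∀ f : ℂ → ℂ, memHw ω f → ∀ N : ℝ, 0 ≤ N → N ^ 2 = hwNormSq ω f →
      ∀ z, ‖z‖ ≤ s → ‖f z‖ ≤ C * N := by
  obtain ⟨C, hC, hCb⟩ := exists_deriv_bound hω_cont hω_pos hs0 hs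
  refine ⟨1 + √(C * Real.pi), by positivity, fun f hf N hN0 hN z hz => ?_⟩
  have ho : IsOpen unitDisk := unitDisk_eq ▸ Metric.isOpen_ball
  set J := ∫ w in unitDisk, ‖deriv f w‖ ^ 2 * ω ‖w‖ with hJdef
  have hJ : 0 ≤ J :=
    setIntegral_nonneg ho.measurableSet fun w hw =>
      mul_nonneg (sq_nonneg _) (hω_pos _ ⟨norm_nonneg _, hw⟩).le
  unfold hwNormSq at hN
  rw [← hJdef] at hN
  have hJp : 0 ≤ J / Real.pi := by positivity
  have hf0 : ‖f 0‖ ≤ N := by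
    refine abs_le_of_sq_le_sq' ?_ hN0 |>.2
    linarith
  have hJN : J ≤ Real.pi * N ^ 2 := by
    have : J / Real.pi ≤ N ^ 2 := by rw [hN]; linarith [sq_nonneg ‖f 0‖]
    rwa [div_le_iff₀' Real.pi_pos] at this
  have hder : ∀ w ∈ Metric.closedBall (0:ℂ) s, ‖deriv f w‖ ≤ √(C * Real.pi) * N := by
    intro w hw
    refine abs_le_of_sq_le_sq' ?_ (by positivity) |>.2
    rw [mul_pow, Real.sq_sqrt (by positivity)]
    have := hCb f hf w (mem_closedBall_zero_iff.mp hw)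
    nlinarith
  have hmv := (convex_closedBall (0:ℂ) s).norm_image_sub_le_of_norm_deriv_le (f := f)
    (fun w hw => hf.1.differentiableAt (ho.mem_nhds
      (lt_of_le_of_lt (mem_closedBall_zero_iff.mp hw) hs))) hder
    (Metric.mem_closedBall_self hs0) (mem_closedBall_zero_iff.mpr hz)
  rw [sub_zero] at hmv
  have h5 : ‖f z‖ ≤ ‖f z - f 0‖ + ‖f 0‖ := by
    simpa using norm_add_le (f z - f 0) (f 0)
  have h6 : √(C * Real.pi) * N * ‖z‖ ≤ √(C * Real.pi) * N :=
    mul_le_of_le_one_right (by positivity) (by linarith)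
  linarith

/-- The identity belongs to `H_ω`, because `ω` is integrable. -/
lemma memHw_id {ω : ℝ → ℝ} (hω_int : IntegrableOn ω (Set.Ico 0 1)) : memHw ω id := by
  refine ⟨differentiableOn_id, ?_⟩
  have ho : IsOpen unitDisk := unitDisk_eq ▸ Metric.isOpen_ball
  simp only [deriv_id, norm_one, one_pow, one_mul]
  rw [← integrable_indicator_iff ho.measurableSet]
  have h1 : unitDisk.indicator (fun z : ℂ => ω ‖z‖)
      = fun z : ℂ => (Set.Iio (1:ℝ)).indicator ω ‖z‖ := by
    ext z
    by_cases hz : ‖z‖ < 1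
    · simp [Set.indicator, unitDisk, hz]
    · simp [Set.indicator, unitDisk, hz]
  rw [h1, integrable_fun_norm_addHaar]
  simp only [Complex.finrank_real_complex, Nat.add_one_sub_one, pow_one, smul_eq_mul]
  have h2 : IntegrableOn (fun y => y * ω y) (Set.Ioo 0 1) := by
    refine Integrable.bdd_mul (c := 1) (hω_int.mono_set Set.Ioo_subset_Ico_self)
      (by fun_prop) ?_
    filter_upwards [ae_restrict_mem measurableSet_Ioo] with y hy
    rw [Real.norm_of_nonneg hy.1.le]
    exact hy.2.le
  have h3 : (fun y => y * (Set.Iio (1:ℝ)).indicator ω y)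
      = (Set.Iio (1:ℝ)).indicator fun y => y * ω y := by
    ext y
    by_cases hy : y < 1 <;> simp [Set.indicator, hy]
  rw [h3, IntegrableOn, integrable_indicator_iff measurableSet_Iio, IntegrableOn,
    Measure.restrict_restrict measurableSet_Iio, Set.inter_comm, Set.Ioi_inter_Iio]
  exact h2

/-- Chain rule: the norm of `f ∘ φ` involves `f` and `f'` only on the image of `φ`. -/
lemma hwNormSq_comp_le {ω : ℝ → ℝ} (hω_pos : ∀ r ∈ Set.Ico (0:ℝ) 1, 0 < ω r) {f φ : ℂ → ℂ}
    (hf : DifferentiableOn ℂ f unitDisk) (hφ : memHw ω φ) (hφ_maps : Set.MapsTo φ unitDisk unitDisk)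
    (hc : memHw ω (f ∘ φ)) {A : ℝ} (hA : ∀ z ∈ unitDisk, ‖f (φ z)‖ ≤ A)
    (hA' : ∀ z ∈ unitDisk, ‖deriv f (φ z)‖ ≤ A) :
    hwNormSq ω (f ∘ φ) ≤ A ^ 2 * (1 + hwNormSq ω φ) := by
  have ho : IsOpen unitDisk := unitDisk_eq ▸ Metric.isOpen_ball
  have h0 : (0:ℂ) ∈ unitDisk := by simp [unitDisk]
  have h1 : ∫ z in unitDisk, ‖deriv (f ∘ φ) z‖ ^ 2 * ω ‖z‖
      ≤ A ^ 2 * ∫ z in unitDisk, ‖deriv φ z‖ ^ 2 * ω ‖z‖ := by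
    rw [← integral_const_mul]
    refine setIntegral_mono_on hc.2 (hφ.2.const_mul _) ho.measurableSet fun z hz => ?_
    rw [deriv_comp z (hf.differentiableAt (ho.mem_nhds (hφ_maps hz)))
      (hφ.1.differentiableAt (ho.mem_nhds hz)), norm_mul, mul_pow, mul_assoc]
    have := (hω_pos ‖z‖ ⟨norm_nonneg _, hz⟩).le
    have := hA' z hz
    gcongr
  unfold hwNormSq
  have h2 : ‖(f ∘ φ) 0‖ ^ 2 ≤ A ^ 2 := pow_le_pow_left₀ (norm_nonneg _) (hA 0 h0) 2
  have h3 := div_le_div_of_nonneg_right h1 Real.pi_pos.le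
  rw [mul_div_assoc] at h3
  nlinarith [mul_nonneg (sq_nonneg A) (sq_nonneg ‖φ 0‖)]

/-! ### Approximation numbers -/

/-- Approximation numbers are controlled by the norm of the operator on the common kernel of
finitely many functionals: precompose with the projection onto the span of their Riesz
representatives. -/
lemma approxNumber_le_of_ker {H : Type} [NormedAddCommGroup H] [InnerProductSpace ℂ H]
    [CompleteSpace H] (T : H →L[ℂ] H) {n : ℕ} (l : Fin n → (H →L[ℂ] ℂ)) {c : ℝ}
    (hc : 0 ≤ c) (h : ∀ g, (∀ i, l i g = 0) → ‖T g‖ ≤ c * ‖g‖) :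
    approxNumber T (n + 1) ≤ c := by
  let e : Fin n → H := fun i => (InnerProductSpace.toDual ℂ H).symm (l i)
  let K : Submodule ℂ H := Submodule.span ℂ (Set.range e)
  have : FiniteDimensional ℂ K := FiniteDimensional.span_of_finite ℂ (Set.finite_range e)
  let R : H →L[ℂ] H := T ∘L K.starProjection
  have hrank : Module.rank ℂ (LinearMap.range (R : H →ₗ[ℂ] H)) < ((n + 1 : ℕ) : Cardinal) := by
    have hle : LinearMap.range (R : H →ₗ[ℂ] H) ≤ K.map (T : H →ₗ[ℂ] H) := by
      rintro _ ⟨g, rfl⟩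
      exact ⟨K.starProjection g, K.starProjection_apply_mem g, rfl⟩
    have hK : Module.rank ℂ K ≤ n := by
      refine (rank_span_le _).trans (Cardinal.mk_range_le.trans ?_)
      simp
    calc Module.rank ℂ (LinearMap.range (R : H →ₗ[ℂ] H))
        ≤ Module.rank ℂ (K.map (T : H →ₗ[ℂ] H)) := Submodule.rank_mono hle
      _ ≤ Module.rank ℂ K := rank_map_le _ _
      _ ≤ n := hK
      _ < ((n + 1 : ℕ) : Cardinal) := by exact_mod_cast Nat.lt_succ_self n
  have hnorm : ‖T - R‖ ≤ c := by
    refine ContinuousLinearMap.opNorm_le_bound _ hc fun g => ?_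
    have h1 : (T - R) g = T (g - K.starProjection g) := by simp [R]
    rw [h1]
    have hperp := K.sub_starProjection_mem_orthogonal g
    refine (h _ fun i => ?_).trans (mul_le_mul_of_nonneg_left ?_ hc)
    · have h2 : inner ℂ (e i) (g - K.starProjection g) = 0 :=
        hperp (e i) (Submodule.subset_span ⟨i, rfl⟩)
      rwa [InnerProductSpace.toDual_symm_apply] at h2
    · have h3 : g - K.starProjection g = Kᗮ.starProjection g := by
        rw [Submodule.starProjection_orthogonal']
        simp
      rw [h3]
      exact Kᗮ.norm_starProjection_apply_le g
  refine le_trans (csInf_le ⟨0, ?_⟩ ⟨R, hrank, rfl⟩) hnorm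
  rintro _ ⟨R', -, rfl⟩
  exact norm_nonneg _

lemma approxNumber_nonneg {E F : Type*} [NormedAddCommGroup E] [NormedAddCommGroup F]
    [NormedSpace ℂ E] [NormedSpace ℂ F] (T : E →L[ℂ] F) (n : ℕ) : 0 ≤ approxNumber T n := by
  refine Real.sInf_nonneg ?_
  rintro _ ⟨R, -, rfl⟩
  exact norm_nonneg _

/-- A sequence bounded by a multiple of `(n + 1) q ^ n` has `n`-th roots eventually below any
`t > q`. -/
lemma eventually_rpow_inv_le {a : ℕ → ℝ} (ha : ∀ n, 0 ≤ a n) {C q t : ℝ} (hq : 0 < q) (hqt : q < t)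
    (h : ∀ᶠ n : ℕ in atTop, a (n + 1) ≤ C * (n + 1) * q ^ n) :
    ∀ᶠ n : ℕ in atTop, a n ^ ((n:ℝ)⁻¹) ≤ t := by
  have ht : 0 < t := hq.trans hqt
  have h1 : Tendsto (fun n : ℕ => C / q * ((n:ℝ) * (q / t) ^ n)) atTop (nhds 0) := by
    have := (tendsto_self_mul_const_pow_of_lt_one (div_pos hq ht).le
      ((div_lt_one ht).mpr hqt)).const_mul (C / q)
    simpa using this
  have h2 : ∀ᶠ n : ℕ in atTop, a n ≤ t ^ n := by
    have h3 := (tendsto_add_atTop_iff_nat 1).mpr h1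
    have h4 : ∀ᶠ n : ℕ in atTop, a (n + 1) ≤ t ^ (n + 1) := by
      filter_upwards [h, h3.eventually (eventually_le_nhds zero_lt_one)] with n hn hn1
      refine hn.trans ?_
      rw [div_pow] at hn1
      push_cast at hn1
      have e : C / q * (((n:ℝ) + 1) * (q ^ (n + 1) / t ^ (n + 1)))
          = C * (n + 1) * q ^ n / t ^ (n + 1) := by
        field_simp
        ring
      rwa [e, div_le_one (pow_pos ht _)] at hn1
    obtain ⟨N, hN⟩ := eventually_atTop.mp h4
    refine eventually_atTop.mpr ⟨N + 1, fun n hn => ?_⟩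
    obtain ⟨m, rfl⟩ := Nat.exists_eq_add_of_le' (show 1 ≤ n by omega)
    exact hN m (by omega)
  filter_upwards [h2, eventually_gt_atTop 0] with n hn hn0
  calc a n ^ ((n:ℝ)⁻¹) ≤ (t ^ n) ^ ((n:ℝ)⁻¹) := Real.rpow_le_rpow (ha n) hn (by positivity)
    _ = t := Real.pow_rpow_inv_natCast ht.le hn0.ne'

/-! ### Choice of points and parameters -/

lemma pdProd_le_one {n : ℕ} {z : Fin n → ℂ} (hz : ∀ i, ‖z i‖ < 1) : pdProd z ≤ 1 :=
  Finset.prod_le_one (fun _ _ => Finset.prod_nonneg fun _ _ => pseudoDist_nonneg _ _) fun _ _ =>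
    Finset.prod_le_one (fun _ _ => pseudoDist_nonneg _ _) fun _ _ => pseudoDist_le_one (hz _) (hz _)

/-- For large `n` there are `n` points in the `ε n`-thickening of `E` whose Blaschke product is at
most `exp (-V n)` on that thickening. -/
lemma eventually_exists_blaschke {E : Set ℂ} (hE : IsCompact E) (hEne : E.Nonempty) {ρ r : ℝ}
    (hr : r < 1) (hEρ : E ⊆ Metric.closedBall 0 ρ) {V : ℝ}
    (hV : V ≤ 0 ∨ ENNReal.ofReal V < greenV E) {ε : ℕ → ℝ} (hε : Tendsto ε atTop (nhds 0))
    (hε0 : ∀ n, 0 < ε n) (hεr : ∀ n, ρ + ε n ≤ r) :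
    ∀ᶠ n : ℕ in atTop, ∃ z : Fin n → ℂ, Function.Injective z ∧ (∀ i, ‖z i‖ ≤ r) ∧
      ∀ x ∈ E, ∀ w ∈ Metric.closedBall x (ε n), ∏ k, pseudoDist w (z k) ≤ Real.exp (-V) ^ n := by
  let S : ℕ → Set ℂ := fun n => Metric.cthickening (ε n) E
  have hSeq : ∀ n, S n = ⋃ x ∈ E, Metric.closedBall x (ε n) := fun n =>
    hE.cthickening_eq_biUnion_closedBall (hε0 n).le
  have hSr : ∀ n, S n ⊆ Metric.closedBall 0 r := by
    intro n w hw
    rw [hSeq] at hw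
    obtain ⟨x, hx, hwx⟩ := Set.mem_iUnion₂.mp hw
    rw [Metric.mem_closedBall] at hwx ⊢
    have := Metric.mem_closedBall.mp (hEρ hx)
    linarith [dist_triangle w x 0, hεr n]
  have hSε : ∀ n, ∀ w ∈ S n, Metric.infDist w E ≤ ε n := by
    intro n w hw
    rw [hSeq] at hw
    obtain ⟨x, hx, hwx⟩ := Set.mem_iUnion₂.mp hw
    exact (Metric.infDist_le_dist_of_mem hx).trans (Metric.mem_closedBall.mp hwx)
  have hEr : E ⊆ Metric.closedBall 0 r := fun x hx => hSr 0 (Metric.self_subset_cthickening E hx)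
  have hlt : ∀ n, ∀ w ∈ S n, ‖w‖ < 1 := fun n w hw =>
    (mem_closedBall_zero_iff.mp (hSr n hw)).trans_lt hr
  have hen : ∀ᶠ n : ℕ in atTop, ∀ z : Fin n → ℂ, (∀ i, z i ∈ S n) →
      pdProd z ≤ Real.exp (-V * (n:ℝ) ^ 2) := by
    rcases hV with hV | hV
    · refine Eventually.of_forall fun n z hz => (pdProd_le_one fun i => hlt n _ (hz i)).trans ?_
      rw [Real.one_le_exp_iff]
      exact mul_nonneg (by linarith) (sq_nonneg _)
    · exact eventually_pdProd_le hE hEne hr hEr hV hε hSr hSε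
  filter_upwards [hen, eventually_gt_atTop 0] with n hn hn0
  have hinf : (S n).Infinite := by
    obtain ⟨x, hx⟩ := hEne
    refine infinite_of_mem_nhds x (mem_of_superset (Metric.closedBall_mem_nhds x (hε0 n)) ?_)
    exact Metric.closedBall_subset_cthickening hx _
  obtain ⟨z, hinj, hzS, hz⟩ := exists_fekete hE.cthickening hinf hr (hSr n) n
  refine ⟨z, hinj, fun i => mem_closedBall_zero_iff.mp (hSr n (hzS i)), fun x hx w hw => ?_⟩
  have h1 := (hz w (Metric.closedBall_subset_cthickening hx _ hw)).trans (hn z hzS)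
  refine (pow_le_pow_iff_left₀ (Finset.prod_nonneg fun _ _ => pseudoDist_nonneg _ _)
    (by positivity) hn0.ne').mp (h1.trans (le_of_eq ?_))
  rw [← pow_mul, ← Real.exp_nat_mul]
  congr 1
  push_cast
  ring

/-- Choice of the energy level `V < V(E)` and of the radius `s`. The alternative `V ≤ 0` is kept so
that positivity of `V(E)` is not needed. -/
lemma exists_params {E : Set ℂ} {t : ℝ} (ht : expNegV E < t) (r : ℝ) (hr : r < 1) :
    ∃ V s : ℝ, (V ≤ 0 ∨ ENNReal.ofReal V < greenV E) ∧ r < s ∧ s < 1 ∧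
      ((s - r) / (1 - r * s))⁻¹ * Real.exp (-V) < t := by
  have hV : ∃ V : ℝ, (V ≤ 0 ∨ ENNReal.ofReal V < greenV E) ∧ Real.exp (-V) < t := by
    unfold expNegV at ht
    split_ifs at ht with h
    · refine ⟨-Real.log t + 1, Or.inr (h ▸ ENNReal.ofReal_lt_top), ?_⟩
      rw [← Real.lt_log_iff_exp_lt ht]
      linarith
    · have ht0 := (Real.exp_pos _).trans ht
      have h1 := (Real.lt_log_iff_exp_lt ht0).mpr ht
      obtain ⟨V, hV1, hV2⟩ := exists_between (show -Real.log t < (greenV E).toReal by linarith)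
      refine ⟨V, ?_, (Real.lt_log_iff_exp_lt ht0).mp (by linarith)⟩
      rcases le_or_gt V 0 with h0 | h0
      · exact Or.inl h0
      · exact Or.inr ((ENNReal.ofReal_lt_iff_lt_toReal h0.le h).mpr hV2)
  obtain ⟨V, hV1, hV2⟩ := hV
  have hr1 : 1 - r ≠ 0 := by linarith
  have hlim : Tendsto (fun s : ℝ => ((s - r) / (1 - r * s))⁻¹ * Real.exp (-V)) (nhds 1)
      (nhds (((1 - r) / (1 - r * 1))⁻¹ * Real.exp (-V))) := by
    have hc : ContinuousAt (fun s : ℝ => ((s - r) / (1 - r * s))⁻¹ * Real.exp (-V)) 1 := by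
      refine ContinuousAt.mul (ContinuousAt.inv₀ (ContinuousAt.div ?_ ?_ ?_) ?_) continuousAt_const
      · fun_prop
      · fun_prop
      · simpa using hr1
      · simp [hr1]
    exact hc
  rw [mul_one, div_self hr1, inv_one, one_mul] at hlim
  have h1 : ∀ᶠ s in nhdsWithin (1:ℝ) (Set.Iio 1),
      ((s - r) / (1 - r * s))⁻¹ * Real.exp (-V) < t :=
    (hlim.mono_left nhdsWithin_le_nhds).eventually (eventually_lt_nhds hV2)
  obtain ⟨s, hs1, hs2⟩ := (h1.and (Ioo_mem_nhdsLT hr)).exists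
  exact ⟨V, s, hV1, hs2.1, hs2.2, hs1⟩

/-- For a symbol `φ` of a weighted analytic Hilbert space `H_ω` with
`‖φ‖_∞ < 1`, one has `β⁺(C_φ) = limsup aₙ(C_φ)^{1/n} ≤ e^{-1/capa(closure (φ(D)))}`. -/
theorem betaPlus_le_expNegV_of_weighted
    (ω : ℝ → ℝ)
    (hω_cont : ContinuousOn ω (Set.Ico 0 1))
    (hω_pos : ∀ r ∈ Set.Ico (0:ℝ) 1, 0 < ω r)
    (hω_int : IntegrableOn ω (Set.Ico 0 1))
    (H : Type) [NormedAddCommGroup H] [InnerProductSpace ℂ H] [CompleteSpace H]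
    (ι : H →ₗ[ℂ] (ℂ → ℂ))
    (hι_mem : ∀ g : H, memHw ω (ι g))
    (hι_norm : ∀ g : H, ‖g‖ ^ 2 = hwNormSq ω (ι g))
    (hι_surj : ∀ f : ℂ → ℂ, memHw ω f → ∃ g : H, ∀ z ∈ unitDisk, ι g z = f z)
    (hι_inj : ∀ g : H, (∀ z ∈ unitDisk, ι g z = 0) → g = 0)
    (φ : ℂ → ℂ)
    (hφ_diff : DifferentiableOn ℂ φ unitDisk)
    (hφ_maps : Set.MapsTo φ unitDisk unitDisk)
    (hφ_symbol : ∀ f : ℂ → ℂ, memHw ω f → memHw ω (f ∘ φ))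
    (ρ : ℝ) (hρ : ρ < 1) (hφ_bdd : ∀ z ∈ unitDisk, ‖φ z‖ ≤ ρ)
    (Cφ : H →L[ℂ] H)
    (hCφ : ∀ g : H, ∀ z ∈ unitDisk, ι (Cφ g) z = ι g (φ z)) :
    Filter.limsup (fun n : ℕ => approxNumber Cφ n ^ ((n : ℝ)⁻¹)) Filter.atTop
      ≤ expNegV (closure (φ '' unitDisk)) := by
  have ho : IsOpen unitDisk := unitDisk_eq ▸ Metric.isOpen_ball
  have h0 : (0:ℂ) ∈ unitDisk := by simp [unitDisk]
  have hρ0 : 0 ≤ ρ := (norm_nonneg _).trans (hφ_bdd 0 h0)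
  set E := closure (φ '' unitDisk) with hEdef
  have hEρ : E ⊆ Metric.closedBall 0 ρ := by
    refine closure_minimal ?_ Metric.isClosed_closedBall
    rintro _ ⟨z, hz, rfl⟩
    exact mem_closedBall_zero_iff.mpr (hφ_bdd z hz)
  have hE : IsCompact E := (isCompact_closedBall (0:ℂ) ρ).of_isClosed_subset isClosed_closure hEρ
  have hφE : ∀ z ∈ unitDisk, φ z ∈ E := fun z hz => subset_closure ⟨z, hz, rfl⟩
  have hφm : memHw ω φ := by simpa using hφ_symbol id (memHw_id hω_int)
  have hφN : 0 ≤ hwNormSq ω φ := by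
    unfold hwNormSq
    have := setIntegral_nonneg (μ := volume) (f := fun z => ‖deriv φ z‖ ^ 2 * ω ‖z‖)
      ho.measurableSet fun z hz => mul_nonneg (sq_nonneg _) (hω_pos _ ⟨norm_nonneg _, hz⟩).le
    positivity
  set η := (1 - ρ) / 2 with hη
  set r := ρ + η with hr
  have hη0 : 0 < η := by rw [hη]; linarith
  have hr1 : r < 1 := by rw [hr, hη]; linarith
  have hr0 : 0 ≤ r := by positivity
  refine le_of_forall_gt_imp_ge_of_dense fun t ht => ?_
  obtain ⟨V, s, hV, hrs, hs1, hq⟩ := exists_params ht r hr1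
  set κ := (s - r) / (1 - r * s) with hκdef
  have hκ : 0 < κ := div_pos (by linarith) (by nlinarith)
  obtain ⟨C, hC0, hC⟩ := exists_eval_bound hω_cont hω_pos (hr0.trans hrs.le) hs1
  have hev : ∀ g : H, ∀ z, ‖z‖ ≤ s → ‖ι g z‖ ≤ C * ‖g‖ := fun g =>
    hC (ι g) (hι_mem g) ‖g‖ (norm_nonneg _) (hι_norm g)
  let ε : ℕ → ℝ := fun n => η / ((n:ℝ) + 1)
  have hε0 : ∀ n, 0 < ε n := fun n => by positivity
  have hεη : ∀ n, ε n ≤ η := fun n => div_le_self hη0.le (by linarith [n.cast_nonneg (α := ℝ)])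
  have hε : Tendsto ε atTop (nhds 0) := by
    have := (tendsto_const_div_atTop_nhds_zero_nat η).comp (tendsto_add_atTop_nat 1)
    refine this.congr fun n => ?_
    simp [ε]
  set D := √(1 + hwNormSq ω φ) with hD
  have hmain : ∀ᶠ n : ℕ in atTop, approxNumber Cφ (n + 1)
      ≤ (C * (1 + 1 / η) * D) * (n + 1) * (κ⁻¹ * Real.exp (-V)) ^ n := by
    filter_upwards [eventually_exists_blaschke hE ⟨_, hφE 0 h0⟩ hr1 hEρ hV hε hε0
      (fun n => by linarith [hεη n])] with n hn
    obtain ⟨z, hinj, hzr, hzB⟩ := hn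
    let l : Fin n → (H →L[ℂ] ℂ) := fun i =>
      LinearMap.mkContinuous ((LinearMap.proj (z i)).comp ι) C
        fun g => hev g (z i) ((hzr i).trans hrs.le)
    refine approxNumber_le_of_ker Cφ l (by positivity) fun g hg => ?_
    set f := ι g with hfdef
    have hf : DifferentiableOn ℂ f unitDisk := (hι_mem g).1
    set A := C * ‖g‖ * (κ⁻¹ * Real.exp (-V)) ^ n with hA
    have hA0 : 0 ≤ A := by positivity
    have hfA : ∀ x ∈ E, ∀ w ∈ Metric.closedBall x (ε n), ‖f w‖ ≤ A := by
      intro x hx w hw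
      have hwr : ‖w‖ ≤ r := by
        have h1 := mem_closedBall_zero_iff.mp (hEρ hx)
        have h2 := mem_closedBall_iff_norm.mp hw
        have h3 := norm_add_le (w - x) x
        rw [sub_add_cancel] at h3
        linarith [hεη n]
      refine (norm_le_of_zeros hr0 hrs hs1 hinj hzr (unitDisk_eq ▸ hf) hg
        (fun y hy => hev g y hy.le) hwr).trans ?_
      rw [hA, mul_pow, ← mul_assoc]
      exact mul_le_mul_of_nonneg_left (hzB x hx w hw) (by positivity)
    have hn1 : (1:ℝ) ≤ n + 1 := by linarith [n.cast_nonneg (α := ℝ)]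
    set A' := A * (1 + 1 / η) * (n + 1) with hA'
    have hAA' : A ≤ A' := by
      rw [hA', mul_assoc]
      refine le_mul_of_one_le_right hA0 (one_le_mul_of_one_le_of_one_le ?_ hn1)
      have : 0 ≤ 1 / η := by positivity
      linarith
    -- Cauchy's estimate on the disk of radius `ε n` costs only a factor linear in `n`
    have hdA : ∀ x ∈ E, ‖deriv f x‖ ≤ A' := by
      intro x hx
      have h1 : Metric.closedBall x (ε n) ⊆ unitDisk := by
        intro w hw
        have h1 := mem_closedBall_zero_iff.mp (hEρ hx)
        have h2 := mem_closedBall_iff_norm.mp hw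
        have h3 := norm_add_le (w - x) x
        rw [sub_add_cancel] at h3
        change ‖w‖ < 1
        linarith [hεη n]
      have h2 : DiffContOnCl ℂ f (Metric.ball x (ε n)) := by
        refine (hf.mono ?_).diffContOnCl
        rwa [closure_ball _ (hε0 n).ne']
      refine (Complex.norm_deriv_le_of_forall_mem_sphere_norm_le (hε0 n) h2
        fun w hw => hfA x hx w (Metric.sphere_subset_closedBall hw)).trans ?_
      have e : A / ε n = A * (1 / η) * (n + 1) := by
        simp only [ε]
        field_simp
      rw [e, hA']
      gcongr
      linarith
    have hself : ∀ x ∈ E, ‖f x‖ ≤ A' := fun x hx =>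
      (hfA x hx x (Metric.mem_closedBall_self (hε0 n).le)).trans hAA'
    have hcomp := hwNormSq_comp_le hω_pos hf hφm hφ_maps (hφ_symbol f (hι_mem g))
      (fun w hw => hself _ (hφE w hw)) (fun w hw => hdA _ (hφE w hw))
    have hT : ‖Cφ g‖ ^ 2 ≤ (A' * D) ^ 2 := by
      rw [hι_norm, hwNormSq_congr (hCφ g), mul_pow, hD, Real.sq_sqrt (by positivity)]
      exact hcomp
    refine (abs_le_of_sq_le_sq' hT (mul_nonneg (hA0.trans hAA') (Real.sqrt_nonneg _))).2.trans
      (le_of_eq ?_)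
    rw [hA', hA]
    ring
  refine limsup_le_of_le ?_ (eventually_rpow_inv_le (approxNumber_nonneg Cφ)
    (by positivity) hq hmain)
  exact isCoboundedUnder_le_of_le atTop (x := 0)
    fun n => Real.rpow_nonneg (approxNumber_nonneg Cφ n) _


end
end

section
/- For every connected Borel subset E of the unit disk D whose closure is contained in D, the Green capacity of E in D equals the Green capacity of its closure: capa(E) = capa(Ē). -/
/-!
The inequality `greenV (closure E) ≤ greenV E` is monotonicity. For the converse, a probability
measure `μ` of finite energy on the closure of `E` is approximated by probability measures carried
by compact subsets of `E`, with energies whose upper limit is at most that of `μ`.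

If `E` is connected with more than one point and `e` lies in its closure, then `w ↦ |w - e|` maps
`E` onto a set containing an interval `(0, s)`. As `E` is Borel, hence analytic, some compact
`K ⊆ E` already has image of measure at least `s / 2` in `(0, s)` (`exists_isCompact_half_image`),
and lifting normalized Lebesgue measure from that image by a Borel section
(`exists_measurable_section`) gives a unit mass on `K` near `e`. Since
`|w - b| ≥ ||w - e| - |b - e||`, its logarithmic potential at any point `b` is controlled by a
one-dimensional integral, and is at most `2 log (1 / s) + O(1)`
(`exists_measure_near`).

Replacing each point of `μ`, up to a displacement of at most `s`, by such a mass at scale `s` gives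
a measure in `E` whose energy is the integral over `μ × μ` of the mutual energies `F (z, w)`
(`exists_smearing`). At distances `|z - w|` comparable to `s` or less, the potential bound gives
`F (z, w) ≤ 2 log (1 / |z - w|) + O(1)`; at larger distances this is immediate. So `F` is dominated
uniformly in `s` by a multiple of the Green function plus a constant, which is integrable, and off
the diagonal `limsup F ≤ g` as `s → 0` by continuity. The reverse Fatou lemma concludes
(`greenV_le_greenEnergy`).
-/

open MeasureTheory Set Filter
open scoped ENNReal NNReal

noncomputable section

/-! ### Inner approximation of analytic sets -/

/-- A closed box `∏ [0, n i]` in Baire space is compact, so every neighbourhood of it contains a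
box that constrains only finitely many coordinates. -/
theorem exists_finite_box_subset (n : ℕ → ℕ) {U : Set (ℕ → ℕ)} (hU : IsOpen U)
    (h : {x : ℕ → ℕ | ∀ i, x i ≤ n i} ⊆ U) :
    ∃ k, {x : ℕ → ℕ | ∀ i < k, x i ≤ n i} ⊆ U := by
  by_contra! hcon
  have hcon' : ∀ k, ∃ x : ℕ → ℕ, (∀ i < k, x i ≤ n i) ∧ x ∉ U := by
    intro k
    obtain ⟨x, hx, hxU⟩ := Set.not_subset.1 (hcon k)
    exact ⟨x, hx, hxU⟩
  choose x hx hxU using hcon'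
  have hL : IsCompact (Set.pi univ fun i => Iic (n i)) :=
    isCompact_univ_pi fun i => (Set.finite_Iic (n i)).isCompact
  obtain ⟨y, hy, ψ, hψ, hlim⟩ := hL.tendsto_subseq
    (x := fun k i => min (x k i) (n i)) (fun k i _ => min_le_right (x k i) (n i))
  have hlim' : Tendsto (fun k => x (ψ k)) atTop (nhds y) := by
    rw [tendsto_pi_nhds] at hlim ⊢
    intro i
    refine (hlim i).congr' ?_
    filter_upwards [eventually_gt_atTop i] with k hk
    exact min_eq_left (hx (ψ k) i (hk.trans_le (hψ.id_le k)))
  exact (hU.isClosed_compl.mem_of_tendsto hlim' (Eventually.of_forall fun k => hxU (ψ k)))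
    (h fun i => hy i (mem_univ i))

/-- Capacitability of continuous images of Baire space: their outer measure is approximated from
below by images of compact boxes. -/
theorem exists_isCompact_lt_measure_image (m : Measure ℝ) [IsFiniteMeasure m]
    {φ : (ℕ → ℕ) → ℝ} (hφ : Continuous φ) {c : ℝ≥0∞} (hc : c < m (range φ)) :
    ∃ L : Set (ℕ → ℕ), IsCompact L ∧ c ≤ m (φ '' L) := by
  have step : ∀ (k : ℕ) (A : Set (ℕ → ℕ)), ∃ N : ℕ, c < m (φ '' A) →
      c < m (φ '' (A ∩ {x | x k ≤ N})) := by
    intro k A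
    by_cases hA : c < m (φ '' A)
    · have hun : φ '' A = ⋃ N : ℕ, φ '' (A ∩ {x | x k ≤ N}) := by
        rw [← image_iUnion, ← inter_iUnion]
        congr 1
        refine (inter_eq_left.2 fun x _ => mem_iUnion.2 ⟨x k, le_refl (x k)⟩).symm
      have hmono : Monotone fun N : ℕ => φ '' (A ∩ {x | x k ≤ N}) := fun a b hab =>
        image_mono (inter_subset_inter_right _ fun x hx => le_trans hx hab)
      rw [hun, hmono.measure_iUnion, lt_iSup_iff] at hA
      exact hA.imp fun N hN _ => hN
    · exact ⟨0, fun h => absurd h hA⟩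
  choose N hN using step
  let A : ℕ → Set (ℕ → ℕ) := fun k => Nat.rec univ (fun k A => A ∩ {x | x k ≤ N k A}) k
  have hA : ∀ k, c < m (φ '' A k) := by
    intro k
    induction k with
    | zero => simpa [A] using hc
    | succ k ih => exact hN k _ ih
  let n : ℕ → ℕ := fun k => N k (A k)
  have hAn : ∀ k, A k = {x | ∀ i < k, x i ≤ n i} := by
    intro k
    induction k with
    | zero => simp [A]
    | succ k ih =>
      have : A (k + 1) = A k ∩ {x | x k ≤ n k} := rfl
      rw [this, ih]
      ext x
      simp only [mem_inter_iff, mem_ofPred_eq, Nat.lt_succ_iff_lt_or_eq]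
      constructor
      · rintro ⟨h1, h2⟩ i (hi | rfl)
        exacts [h1 i hi, h2]
      · exact fun h => ⟨fun i hi => h i (Or.inl hi), h k (Or.inr rfl)⟩
  refine ⟨{x | ∀ i, x i ≤ n i}, ?_, ?_⟩
  · have : {x : ℕ → ℕ | ∀ i, x i ≤ n i} = Set.pi univ fun i => Iic (n i) := by
      ext x; simp [Pi.le_def]
    rw [this]
    exact isCompact_univ_pi fun i => (Set.finite_Iic (n i)).isCompact
  · rw [Set.measure_eq_iInf_isOpen]
    refine le_iInf₂ fun U hU => le_iInf fun hUo => ?_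
    obtain ⟨k, hk⟩ := exists_finite_box_subset n (hUo.preimage hφ) (image_subset_iff.1 hU)
    rw [← hAn] at hk
    exact (hA k).le.trans (measure_mono (image_subset_iff.2 hk))

/-- A Borel set `E` has a compact subset whose image under `p` fills half of `(0, s)`, as soon as
`p` maps `E` onto an interval containing `(0, s)`. -/
theorem exists_isCompact_half_image {E : Set ℂ} (hE : MeasurableSet E) {p : ℂ → ℝ}
    (hp : Continuous p) {s : ℝ} (hs : 0 < s) (hsub : Ioo 0 s ⊆ p '' E) :
    ∃ K ⊆ E, IsCompact K ∧ ENNReal.ofReal (s / 2) ≤ volume (p '' K ∩ Ioo 0 s) := by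
  have hE' := hE.analyticSet
  rw [AnalyticSet] at hE'
  rcases hE' with rfl | ⟨f, hf, rfl⟩
  · have : s / 2 ∈ p '' ∅ := hsub ⟨by linarith, by linarith⟩
    simp at this
  have hc : ENNReal.ofReal (s / 2) < volume.restrict (Ioo 0 s) (range (p ∘ f)) := by
    rw [range_comp, Measure.restrict_apply' measurableSet_Ioo, inter_eq_right.2 hsub,
      Real.volume_Ioo]
    exact (ENNReal.ofReal_lt_ofReal_iff (by linarith)).2 (by linarith)
  obtain ⟨L, hL, hLm⟩ := exists_isCompact_lt_measure_image _ (hp.comp hf) hc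
  refine ⟨f '' L, image_subset_range _ _, hL.image hf, ?_⟩
  rwa [Measure.restrict_apply' measurableSet_Ioo, image_comp] at hLm

/-! ### Borel sections of continuous functions on compact plane sets -/

/-- The least value of `q` on the fibre of `p` over `t` inside `K` is a Borel function of `t`. -/
theorem exists_measurable_fibre_min {K : Set ℂ} (hK : IsCompact K) {p q : ℂ → ℝ}
    (hp : Continuous p) (hq : Continuous q) :
    ∃ x : ℝ → ℝ, Measurable x ∧ ∀ t ∈ p '' K,
      (∃ w ∈ K, p w = t ∧ q w = x t) ∧ ∀ w ∈ K, p w = t → x t ≤ q w := by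
  classical
  let x : ℝ → ℝ := fun t => if t ∈ p '' K then sInf (q '' (K ∩ p ⁻¹' {t})) else 0
  have hx : ∀ t ∈ p '' K,
      (∃ w ∈ K, p w = t ∧ q w = x t) ∧ ∀ w ∈ K, p w = t → x t ≤ q w := by
    rintro t ht
    have hcomp : IsCompact (K ∩ p ⁻¹' {t}) := hK.inter_right (isClosed_singleton.preimage hp)
    have hne : (K ∩ p ⁻¹' {t}).Nonempty := by
      obtain ⟨w, hw, rfl⟩ := ht
      exact ⟨w, hw, rfl⟩
    have hxt : x t = sInf (q '' (K ∩ p ⁻¹' {t})) := if_pos ht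
    obtain ⟨w, hw, hqw⟩ := (hcomp.image hq).sInf_mem (hne.image q)
    refine ⟨⟨w, hw.1, hw.2, hqw.trans hxt.symm⟩, fun v hv hvt => ?_⟩
    rw [hxt]
    exact csInf_le (hcomp.image hq).bddBelow ⟨v, ⟨hv, hvt⟩, rfl⟩
  refine ⟨x, ?_, hx⟩
  have hKm : MeasurableSet (p '' K) := (hK.image hp).measurableSet
  refine measurable_of_Iic fun a => ?_
  -- a fibre attains its least value of `q`, so on `p '' K` sublevel sets of `x` are compact images
  have : x ⁻¹' Iic a = p '' (K ∩ q ⁻¹' Iic a) ∪ ((p '' K)ᶜ ∩ {_t | 0 ≤ a}) := by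
    ext t
    by_cases ht : t ∈ p '' K
    · simp only [mem_preimage, mem_Iic, mem_union, mem_inter_iff, mem_compl_iff, ht,
        not_true_eq_false, false_and, or_false]
      constructor
      · intro h
        obtain ⟨w, hw, hpw, hqw⟩ := (hx t ht).1
        exact ⟨w, ⟨hw, by simpa [hqw] using h⟩, hpw⟩
      · rintro ⟨w, ⟨hw, hqw⟩, hpw⟩
        exact ((hx t ht).2 w hw hpw).trans hqw
    · have hn : t ∉ p '' (K ∩ q ⁻¹' Iic a) := fun h => ht (image_mono inter_subset_left h)
      have hxt : x t = 0 := if_neg ht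
      simp [hn, ht, hxt, -mem_image]
  rw [this]
  exact ((hK.inter_right (isClosed_Iic.preimage hq)).image hp).measurableSet.union
    (hKm.compl.inter (MeasurableSet.const _))

/-- A continuous real function on a compact plane set has a Borel section: take the
lexicographically least point of each fibre. -/
theorem exists_measurable_section {K : Set ℂ} (hK : IsCompact K) {p : ℂ → ℝ}
    (hp : Continuous p) :
    ∃ σ : ℝ → ℂ, Measurable σ ∧ ∀ t ∈ p '' K, σ t ∈ K ∧ p (σ t) = t := by
  obtain ⟨x, hxm, hx⟩ := exists_measurable_fibre_min hK hp Complex.continuous_re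
  have him : Continuous fun w : ℂ => w.im := Complex.continuous_im
  have hKb : ∀ b : ℝ, IsCompact (K ∩ Complex.im ⁻¹' Iic b) := fun b =>
    hK.inter_right (isClosed_Iic.preimage him)
  choose xb hxbm hxb using fun b : ℝ =>
    exists_measurable_fibre_min (hKb b) hp Complex.continuous_re
  classical
  -- the part of the fibre over `t` on which the real part is least
  let F : ℝ → Set ℂ := fun t => K ∩ p ⁻¹' {t} ∩ Complex.re ⁻¹' {x t}
  have hFc : ∀ t, IsCompact (F t) := fun t =>
    (hK.inter_right (isClosed_singleton.preimage hp)).inter_right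
      (isClosed_singleton.preimage Complex.continuous_re)
  let y : ℝ → ℝ := fun t => if t ∈ p '' K then sInf (Complex.im '' F t) else 0
  have hy : ∀ t ∈ p '' K, (∃ w ∈ F t, w.im = y t) ∧ ∀ w ∈ F t, y t ≤ w.im := by
    intro t ht
    obtain ⟨w, hw, hpw, hxw⟩ := (hx t ht).1
    have hne : (F t).Nonempty := ⟨w, ⟨hw, hpw⟩, hxw⟩
    have hyt : y t = sInf (Complex.im '' F t) := if_pos ht
    obtain ⟨v, hv, hvi⟩ := ((hFc t).image him).sInf_mem (hne.image _)
    refine ⟨⟨v, hv, hvi.trans hyt.symm⟩, fun u hu => ?_⟩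
    rw [hyt]
    exact csInf_le ((hFc t).image him).bddBelow ⟨u, hu, rfl⟩
  have hym : Measurable y := by
    refine measurable_of_Iic fun b => ?_
    have : y ⁻¹' Iic b = (p '' (K ∩ Complex.im ⁻¹' Iic b) ∩ {t | xb b t ≤ x t}) ∪
        ((p '' K)ᶜ ∩ {_t | 0 ≤ b}) := by
      ext t
      by_cases ht : t ∈ p '' K
      · simp only [mem_preimage, mem_Iic, mem_union, mem_inter_iff, mem_compl_iff, ht,
          not_true_eq_false, false_and, or_false, mem_ofPred_eq]
        constructor
        · intro h
          obtain ⟨w, ⟨⟨hw, hpw⟩, hxw⟩, hyw⟩ := (hy t ht).1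
          have hwb : w ∈ K ∩ Complex.im ⁻¹' Iic b := ⟨hw, by simpa [hyw] using h⟩
          have hwt : t ∈ p '' (K ∩ Complex.im ⁻¹' Iic b) := ⟨w, hwb, hpw⟩
          exact ⟨hwt, ((hxb b t hwt).2 w hwb hpw).trans hxw.le⟩
        · rintro ⟨h1, h2⟩
          obtain ⟨w, hw, hpw, hxw⟩ := (hxb b t h1).1
          have : w.re = x t := le_antisymm (hxw.trans_le h2) ((hx t ht).2 w hw.1 hpw)
          exact ((hy t ht).2 w ⟨⟨hw.1, hpw⟩, this⟩).trans hw.2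
      · have hn : t ∉ p '' (K ∩ Complex.im ⁻¹' Iic b) := fun h =>
          ht (image_mono inter_subset_left h)
        have hyt : y t = 0 := if_neg ht
        simp [hn, ht, hyt, -mem_image]
    rw [this]
    exact (((hKb b).image hp).measurableSet.inter (measurableSet_le (hxbm b) hxm)).union
      ((hK.image hp).measurableSet.compl.inter (MeasurableSet.const _))
  refine ⟨fun t => x t + y t * Complex.I, by fun_prop, fun t ht => ?_⟩
  obtain ⟨w, ⟨⟨hw, hpw⟩, hxw⟩, hyw⟩ := (hy t ht).1
  have : (x t + y t * Complex.I : ℂ) = w := by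
    rw [← hyw, ← (show w.re = x t from hxw)]
    exact Complex.re_add_im w
  simpa only [this] using ⟨hw, hpw⟩

/-! ### The logarithmic kernel -/

/-- The logarithmic kernel `log (2 / x)`, with value `⊤` at `0`, truncated to `0` for `x ≥ 2`.
The constant `2` is the diameter of the disk, so no truncation occurs at distances between points
of the disk. -/
def logKer (x : ℝ) : ℝ≥0∞ := if x = 0 then ⊤ else ENNReal.ofReal (Real.log (2 / x))

theorem measurable_logKer : Measurable logKer :=
  Measurable.ite (measurableSet_singleton 0) measurable_const (by fun_prop)

theorem logKer_ne_top {x : ℝ} (hx : x ≠ 0) : logKer x ≠ ⊤ := by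
  simp [logKer, hx]

theorem logKer_anti {x y : ℝ} (hx : 0 ≤ x) (hxy : x ≤ y) : logKer y ≤ logKer x := by
  rcases hx.eq_or_lt with rfl | hx
  · simp [logKer]
  · have hy : 0 < y := hx.trans_le hxy
    simp only [logKer, hx.ne', hy.ne', if_false]
    gcongr

theorem logKer_div_eight_le {x : ℝ} (hx : 0 ≤ x) :
    logKer (x / 8) ≤ logKer x + ENNReal.ofReal (Real.log 8) := by
  rcases hx.eq_or_lt with rfl | hx
  · simp [logKer]
  · have h8 : x / 8 ≠ 0 := by positivity
    simp only [logKer, hx.ne', h8, if_false]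
    refine le_trans (ENNReal.ofReal_le_ofReal (le_of_eq ?_)) ENNReal.ofReal_add_le
    rw [← Real.log_mul (by positivity) (by norm_num)]
    congr 1
    field_simp

theorem one_sub_le_norm_one_sub {ρ : ℝ} {z w : ℂ} (hz : ‖z‖ ≤ 1) (hw : ‖w‖ ≤ ρ) :
    1 - ρ ≤ ‖1 - (starRingEnd ℂ) w * z‖ := by
  have h1 := norm_sub_norm_le (1 : ℂ) ((starRingEnd ℂ) w * z)
  rw [norm_one, norm_mul, RCLike.norm_conj] at h1
  nlinarith [norm_nonneg z, norm_nonneg w]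

theorem greenFnE_le_logKer {z w : ℂ} (hz : z ∈ unitDisk) (hw : w ∈ unitDisk) :
    greenFnE z w ≤ logKer ‖z - w‖ := by
  by_cases h : z = w
  · simp [h, logKer]
  have hd : 0 < ‖z - w‖ := norm_pos_iff.2 (sub_ne_zero.2 h)
  have hz' : ‖z‖ < 1 := hz
  have hw' : ‖w‖ < 1 := hw
  simp only [greenFnE, logKer, h, hd.ne', if_false]
  have h1 := one_sub_le_norm_one_sub hz'.le le_rfl (w := w)
  have h2 := norm_sub_le (1 : ℂ) ((starRingEnd ℂ) w * z)
  rw [norm_one, norm_mul, RCLike.norm_conj] at h2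
  rw [norm_div]
  refine ENNReal.ofReal_le_ofReal (Real.log_le_log (div_pos (by linarith) hd) ?_)
  gcongr
  nlinarith [norm_nonneg z, norm_nonneg w]

theorem logKer_le_greenFnE_add {ρ : ℝ} (hρ : ρ < 1) {z w : ℂ} (hz : ‖z‖ ≤ ρ) (hw : ‖w‖ ≤ ρ) :
    logKer ‖z - w‖ ≤ greenFnE z w + ENNReal.ofReal (Real.log (2 / (1 - ρ))) := by
  by_cases h : z = w
  · simp [h, greenFnE]
  have hd : 0 < ‖z - w‖ := norm_pos_iff.2 (sub_ne_zero.2 h)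
  simp only [greenFnE, logKer, h, hd.ne', if_false]
  have hρ' : 0 < 1 - ρ := by linarith
  have h1 := one_sub_le_norm_one_sub (hz.trans hρ.le) hw
  have hm : 0 < ‖1 - (starRingEnd ℂ) w * z‖ := hρ'.trans_le h1
  refine le_trans (ENNReal.ofReal_le_ofReal ?_) ENNReal.ofReal_add_le
  rw [norm_div, ← Real.log_mul (by positivity) (by positivity)]
  refine Real.log_le_log (by positivity) ?_
  rw [div_mul_div_comm, div_le_div_iff₀ hd (by positivity)]
  nlinarith [mul_le_mul_of_nonneg_left h1 hd.le]

theorem measurable_greenFnE : Measurable fun p : ℂ × ℂ => greenFnE p.1 p.2 := by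
  unfold greenFnE
  refine Measurable.ite (measurableSet_eq_fun measurable_fst measurable_snd) measurable_const ?_
  have : Measurable (starRingEnd ℂ) := RCLike.continuous_conj.measurable
  fun_prop

/-- Off the diagonal the Green function is upper semicontinuous (indeed continuous). -/
theorem eventually_greenFnE_lt {z w : ℂ} (hz : z ∈ unitDisk) (hw : w ∈ unitDisk) {c : ℝ≥0∞}
    (hc : greenFnE z w < c) : ∀ᶠ p : ℂ × ℂ in nhds (z, w), greenFnE p.1 p.2 < c := by
  have hzw : z ≠ w := by
    rintro rfl
    simp [greenFnE] at hc
  have hz' : ‖z‖ < 1 := hz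
  have hw' : ‖w‖ < 1 := hw
  have h1 := one_sub_le_norm_one_sub hz'.le le_rfl (w := w)
  have hne : 1 - (starRingEnd ℂ) w * z ≠ 0 := norm_pos_iff.1 (by linarith)
  have hcont : ContinuousAt (fun p : ℂ × ℂ => ENNReal.ofReal
      (Real.log ‖(1 - (starRingEnd ℂ) p.2 * p.1) / (p.1 - p.2)‖)) (z, w) := by
    refine ENNReal.continuous_ofReal.continuousAt.comp (ContinuousAt.log (ContinuousAt.norm ?_) ?_)
    · refine ContinuousAt.div ?_ (by fun_prop) (sub_ne_zero.2 hzw)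
      have : Continuous (starRingEnd ℂ) := RCLike.continuous_conj
      fun_prop
    · exact norm_ne_zero_iff.2 (div_ne_zero hne (sub_ne_zero.2 hzw))
  have hopen : ∀ᶠ p : ℂ × ℂ in nhds (z, w), p.1 ≠ p.2 :=
    (isOpen_ne_fun continuous_fst continuous_snd).mem_nhds hzw
  rw [greenFnE, if_neg hzw] at hc
  filter_upwards [hopen, hcont.eventually_lt_const hc] with p hp hpc
  rwa [greenFnE, if_neg hp]

theorem lintegral_neg_log_lt_top : ∫⁻ u : ℝ, ENNReal.ofReal (-Real.log u) < ⊤ := by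
  have hint : IntegrableOn (fun u => -Real.log u) (Ioc (-1 : ℝ) 1) :=
    ((intervalIntegrable_iff_integrableOn_Ioc_of_le (by norm_num)).1
      intervalIntegral.intervalIntegrable_log').neg
  rw [← lintegral_add_compl _ (measurableSet_Ioc (a := (-1 : ℝ)) (b := 1)),
    setLIntegral_eq_zero measurableSet_Ioc.compl, add_zero]
  · exact hint.lintegral_lt_top
  · intro u hu
    have : 1 ≤ |u| := by
      by_contra! h
      exact hu ⟨(abs_lt.1 h).1, (abs_lt.1 h).2.le⟩
    simp only [Pi.zero_apply]
    rw [← Real.log_abs u]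
    exact ENNReal.ofReal_of_nonpos (neg_nonpos.2 (Real.log_nonneg this))

/-- Integrating the one-dimensional kernel over `(0, s)` costs at most its value at `s`, up to
an additive constant. -/
theorem exists_lintegral_logKer_le : ∃ C : ℝ≥0∞, C ≠ ⊤ ∧ ∀ s : ℝ, 0 < s → ∀ t : ℝ,
    ∫⁻ r in Ioo 0 s, logKer |r - t| ≤ ENNReal.ofReal s * (logKer s + C) := by
  refine ⟨∫⁻ u : ℝ, ENNReal.ofReal (-Real.log u), lintegral_neg_log_lt_top.ne, fun s hs t => ?_⟩
  have hpt : ∀ x : ℝ, x ≠ 0 →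
      logKer |x| ≤ logKer s + ENNReal.ofReal (-Real.log (s⁻¹ * x)) := by
    intro x hx
    simp only [logKer, abs_ne_zero.2 hx, hs.ne', if_false]
    refine le_trans (ENNReal.ofReal_le_ofReal (le_of_eq ?_)) ENNReal.ofReal_add_le
    rw [Real.log_div (by norm_num) (abs_ne_zero.2 hx), Real.log_abs,
      Real.log_div (by norm_num) hs.ne', Real.log_mul (inv_ne_zero hs.ne') hx, Real.log_inv]
    ring
  have hae : ∀ᵐ r ∂(volume.restrict (Ioo 0 s)),
      logKer |r - t| ≤ logKer s + ENNReal.ofReal (-Real.log (s⁻¹ * (r - t))) := by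
    refine ae_restrict_of_ae ?_
    filter_upwards [Measure.ae_ne volume t] with r hr
    exact hpt _ (sub_ne_zero.2 hr)
  have hm : Measurable fun u : ℝ => ENNReal.ofReal (-Real.log u) := by fun_prop
  have hscale : ∫⁻ r : ℝ, ENNReal.ofReal (-Real.log (s⁻¹ * (r - t))) =
      ENNReal.ofReal s * ∫⁻ u : ℝ, ENNReal.ofReal (-Real.log u) := by
    rw [lintegral_sub_right_eq_self (fun r => ENNReal.ofReal (-Real.log (s⁻¹ * r))) t,
      ← lintegral_map hm (measurable_const_mul s⁻¹),
      Real.map_volume_mul_left (inv_ne_zero hs.ne'), lintegral_smul_measure, inv_inv,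
      abs_of_pos hs, smul_eq_mul]
  calc ∫⁻ r in Ioo 0 s, logKer |r - t|
      ≤ ∫⁻ r in Ioo 0 s, (logKer s + ENNReal.ofReal (-Real.log (s⁻¹ * (r - t)))) :=
        lintegral_mono_ae hae
    _ = logKer s * ENNReal.ofReal s
        + ∫⁻ r in Ioo 0 s, ENNReal.ofReal (-Real.log (s⁻¹ * (r - t))) := by
        rw [lintegral_add_left measurable_const, setLIntegral_const, Real.volume_Ioo, sub_zero]
    _ ≤ logKer s * ENNReal.ofReal s
        + ∫⁻ r : ℝ, ENNReal.ofReal (-Real.log (s⁻¹ * (r - t))) := by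
        gcongr
        exact Measure.restrict_le_self
    _ = _ := by rw [hscale]; ring

/-! ### Spreading mass along a connected set -/

/-- Around each point `e` of the closure of a connected Borel set `E`, a unit mass can be spread
over a compact subset of `E` within distance `s` of `e` so that its logarithmic potential is
everywhere at most of the order of `log (1 / s)`: the distances to `e` of points of `E` fill
`(0, s)`, and the mass is the lift of normalized Lebesgue measure on a large compact part of
these distances. -/
theorem exists_measure_near {E : Set ℂ} (hE : MeasurableSet E) (hconn : IsPreconnected E)
    {C : ℝ≥0∞} {s : ℝ} (hs : 0 < s)
    (hC : ∀ t : ℝ, ∫⁻ r in Ioo 0 s, logKer |r - t| ≤ ENNReal.ofReal s * (logKer s + C))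
    {e : ℂ} (he : e ∈ closure E) (hv : ∃ v ∈ E, s ≤ ‖v - e‖) :
    ∃ (Λ : Measure ℂ) (K : Set ℂ), IsProbabilityMeasure Λ ∧ K ⊆ E ∧
      K ⊆ Metric.closedBall e s ∧ IsCompact K ∧ Λ Kᶜ = 0 ∧
      ∀ b, ∫⁻ a, logKer ‖a - b‖ ∂Λ ≤ 2 * (logKer s + C) := by
  let p : ℂ → ℝ := fun a => ‖a - e‖
  have hp : Continuous p := by fun_prop
  have hsub : Ioo 0 s ⊆ p '' E := by
    rintro r ⟨hr0, hrs⟩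
    obtain ⟨v, hvE, hv⟩ := hv
    obtain ⟨u, huE, hu⟩ := Metric.mem_closure_iff.1 he r hr0
    rw [dist_comm, dist_eq_norm] at hu
    exact (hconn.image p hp.continuousOn).ordConnected.out ⟨u, huE, rfl⟩ ⟨v, hvE, rfl⟩
      ⟨hu.le, hrs.le.trans hv⟩
  obtain ⟨K, hKE, hK, hKvol⟩ := exists_isCompact_half_image hE hp hs hsub
  obtain ⟨σ, hσm, hσ⟩ := exists_measurable_section hK hp
  let T : Set ℝ := p '' K ∩ Ioo 0 s
  have hT : MeasurableSet T := (hK.image hp).measurableSet.inter measurableSet_Ioo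
  have hTpos : volume T ≠ 0 :=
    ((ENNReal.ofReal_pos.2 (by linarith : (0 : ℝ) < s / 2)).trans_le hKvol).ne'
  have hTtop : volume T ≠ ⊤ :=
    ((measure_mono inter_subset_right).trans_lt (by simp : volume (Ioo 0 s) < ⊤)).ne
  let Λ : Measure ℂ := ((volume T)⁻¹ • volume.restrict T).map σ
  have hσT : ∀ r ∈ T, σ r ∈ K ∧ ‖σ r - e‖ = r := fun r hr => hσ r hr.1
  have hΛ : ∀ A : Set ℂ, MeasurableSet A → (∀ r ∈ T, σ r ∈ A) → Λ Aᶜ = 0 := by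
    intro A hA h
    have : σ ⁻¹' Aᶜ ∩ T = ∅ := by
      ext r
      simp only [mem_inter_iff, mem_preimage, mem_compl_iff, mem_empty_iff_false, iff_false]
      exact fun hr => hr.1 (h r hr.2)
    rw [Measure.map_apply hσm hA.compl, Measure.smul_apply,
      Measure.restrict_apply (hσm hA.compl), this]
    simp
  refine ⟨Λ, K ∩ Metric.closedBall e s, ⟨?_⟩, inter_subset_left.trans hKE, inter_subset_right,
    hK.inter_right Metric.isClosed_closedBall, ?_, fun b => ?_⟩
  · rw [Measure.map_apply hσm MeasurableSet.univ]
    simp [ENNReal.inv_mul_cancel hTpos hTtop]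
  · refine hΛ _ (hK.inter_right Metric.isClosed_closedBall).measurableSet fun r hr => ?_
    refine ⟨(hσT r hr).1, ?_⟩
    rw [mem_closedBall_iff_norm, (hσT r hr).2]
    exact hr.2.2.le
  · have hm : Measurable fun a : ℂ => logKer ‖a - b‖ := measurable_logKer.comp (by fun_prop)
    rw [lintegral_map hm hσm, lintegral_smul_measure, smul_eq_mul]
    calc (volume T)⁻¹ * ∫⁻ r in T, logKer ‖σ r - b‖
        ≤ (ENNReal.ofReal (s / 2))⁻¹ * (ENNReal.ofReal s * (logKer s + C)) := by
          refine mul_le_mul' (ENNReal.inv_le_inv.2 hKvol) ?_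
          refine le_trans (le_trans (setLIntegral_mono' hT fun r hr => ?_)
            (lintegral_mono_set inter_subset_right)) (hC ‖b - e‖)
          -- circles about `e` are at least as far apart as their radii
          refine logKer_anti (abs_nonneg _) ?_
          have := abs_norm_sub_norm_le (σ r - e) (b - e)
          rwa [(hσT r hr).2, sub_sub_sub_cancel_right] at this
      _ = 2 * (logKer s + C) := by
          rw [← mul_assoc]
          congr 1
          rw [← ENNReal.ofReal_inv_of_pos (by linarith), ← ENNReal.ofReal_mul (by positivity)]
          have : (s / 2)⁻¹ * s = 2 := by field_simp
          rw [this]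
          simp

/-- The smearing of a measure `μ` on the closure of `E` into `E` at scale `s`: each point is
moved to one of finitely many nearby centres, where its mass is spread as in
`exists_measure_near`. Here `F (z, w)` is the mutual energy of the masses coming from `z`
and `w`. -/
theorem exists_smearing {E : Set ℂ} (hE : MeasurableSet E) (hconn : IsPreconnected E)
    (hne : E.Nonempty) (hD : closure E ⊆ unitDisk) (hcomp : IsCompact (closure E))
    {C : ℝ≥0∞} {s : ℝ} (hs : 0 < s)
    (hC : ∀ t : ℝ, ∫⁻ r in Ioo 0 s, logKer |r - t| ≤ ENNReal.ofReal s * (logKer s + C))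
    (hv : ∀ e ∈ closure E, ∃ v ∈ E, s ≤ ‖v - e‖)
    (μ : Measure ℂ) [IsProbabilityMeasure μ] :
    ∃ F : ℂ × ℂ → ℝ≥0∞, Measurable F ∧ greenV E ≤ ∫⁻ p, F p ∂(μ.prod μ) ∧
      ∀ z ∈ closure E, ∀ w ∈ closure E,
        F (z, w) ≤ 2 * (logKer ‖z - w‖ + ENNReal.ofReal (Real.log 8) + C) ∧
        ∀ c, (∀ a ∈ E, ∀ b ∈ E, ‖a - z‖ ≤ 2 * s → ‖b - w‖ ≤ 2 * s → greenFnE a b ≤ c) →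
          F (z, w) ≤ c := by
  classical
  have : Nonempty (closure E) := hne.closure.to_subtype
  let u : ℕ → closure E := TopologicalSpace.denseSeq (closure E)
  choose Λ K hΛprob hKE hKball hKc hΛK hΛpot using fun n =>
    exists_measure_near hE hconn hs hC (u n).2 (hv _ (u n).2)
  obtain ⟨t, ht⟩ := hcomp.elim_finite_subcover (fun n => Metric.ball (u n : ℂ) s)
    (fun n => Metric.isOpen_ball) (by
      intro z hz
      obtain ⟨n, hn⟩ :=
        (TopologicalSpace.denseRange_denseSeq (closure E)).exists_dist_lt ⟨z, hz⟩ hs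
      exact mem_iUnion.2 ⟨n, hn⟩)
  obtain ⟨N, hN⟩ : ∃ N : ℕ, ∀ n ∈ t, n < N := by
    refine ⟨t.sup id + 1, fun n hn => Nat.lt_succ_of_le (Finset.le_sup (f := id) hn)⟩
  have hex : ∀ z : ℂ, ∃ n, z ∈ Metric.ball (u n : ℂ) s ∨ n = N := fun z => ⟨N, Or.inr rfl⟩
  let π : ℂ → ℕ := fun z => Nat.find (hex z)
  have hπm : Measurable π := by
    refine measurable_find hex fun k => ?_
    exact (measurableSet_ball.union (MeasurableSet.const (k = N)))
  have hπN : ∀ z, π z ≤ N := fun z => Nat.find_min' (hex z) (Or.inr rfl)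
  have hπ : ∀ z ∈ closure E, ‖(u (π z) : ℂ) - z‖ ≤ s := by
    intro z hz
    obtain ⟨n, hnt, hn⟩ := mem_iUnion₂.1 (ht hz)
    have hlt : π z < N := (Nat.find_min' (hex z) (Or.inl hn)).trans_lt (hN n hnt)
    have := (Nat.find_spec (hex z)).resolve_right hlt.ne
    rw [mem_ball_iff_norm'] at this
    exact this.le
  have hΛm : Measurable fun z => Λ (π z) := (Measurable.of_discrete (f := Λ)).comp hπm
  let ν : Measure ℂ := μ.bind fun z => Λ (π z)
  let G : ℂ → ℕ → ℝ≥0∞ := fun a m => ∫⁻ b, greenFnE a b ∂(Λ m)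
  have hGm : Measurable fun q : ℂ × ℕ => G q.1 q.2 :=
    measurable_from_prod_countable_left fun m =>
      measurable_greenFnE.lintegral_prod_right' (ν := Λ m)
  let H : ℕ × ℕ → ℝ≥0∞ := fun q => ∫⁻ a, G a q.2 ∂(Λ q.1)
  have hKae : ∀ n, ∀ᵐ a ∂(Λ n), a ∈ K n := fun n => mem_ae_iff.2 (hΛK n)
  have hνprob : IsProbabilityMeasure ν := by
    refine ⟨?_⟩
    rw [Measure.bind_apply MeasurableSet.univ hΛm.aemeasurable]
    simp
  have henergy : greenEnergy ν = ∫⁻ p, H (π p.1, π p.2) ∂(μ.prod μ) := by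
    have hHm : Measurable fun p : ℂ × ℂ => H (π p.1, π p.2) :=
      (Measurable.of_discrete (f := H)).comp
        ((hπm.comp measurable_fst).prodMk (hπm.comp measurable_snd))
    rw [lintegral_prod _ hHm.aemeasurable, greenEnergy,
      Measure.lintegral_bind hΛm.aemeasurable
        (measurable_greenFnE.lintegral_prod_right').aemeasurable]
    refine lintegral_congr fun z => ?_
    have h1 : ∀ a, ∫⁻ b, greenFnE a b ∂ν = ∫⁻ w, G a (π w) ∂μ := fun a =>
      Measure.lintegral_bind hΛm.aemeasurable
        (measurable_greenFnE.comp measurable_prodMk_left).aemeasurable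
    simp only [h1]
    refine lintegral_lintegral_swap (Measurable.aemeasurable ?_)
    exact hGm.comp (measurable_fst.prodMk (hπm.comp measurable_snd))
  have hsecond : ∀ z ∈ closure E, ∀ w ∈ closure E, ∀ c,
      (∀ a ∈ E, ∀ b ∈ E, ‖a - z‖ ≤ 2 * s → ‖b - w‖ ≤ 2 * s → greenFnE a b ≤ c) →
        H (π z, π w) ≤ c := by
    intro z hz w hw c hc
    have hnear : ∀ x ∈ closure E, ∀ a ∈ K (π x), ‖a - x‖ ≤ 2 * s := by
      intro x hx a ha
      have h1 : ‖a - u (π x)‖ ≤ s := mem_closedBall_iff_norm.1 (hKball _ ha)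
      have h2 := norm_sub_le_norm_sub_add_norm_sub a (u (π x) : ℂ) x
      linarith [hπ x hx]
    calc H (π z, π w) ≤ ∫⁻ _a, ∫⁻ _b, c ∂(Λ (π w)) ∂(Λ (π z)) := by
          refine lintegral_mono_ae ((hKae _).mono fun a ha => ?_)
          refine lintegral_mono_ae ((hKae _).mono fun b hb => ?_)
          exact hc a (hKE _ ha) b (hKE _ hb) (hnear z hz a ha) (hnear w hw b hb)
      _ = c := by simp
  refine ⟨fun p => H (π p.1, π p.2), (Measurable.of_discrete (f := H)).comp
    ((hπm.comp measurable_fst).prodMk (hπm.comp measurable_snd)), ?_,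
    fun z hz w hw => ⟨?_, hsecond z hz w hw⟩⟩
  · rw [← henergy]
    refine iInf_le_of_le ν (iInf_le_of_le hνprob (iInf_le_of_le
      ⟨⋃ n ∈ Iic N, K n, iUnion₂_subset fun n _ => hKE n,
        (Set.finite_Iic N).isCompact_biUnion fun n _ => hKc n, ?_⟩ le_rfl))
    rw [Measure.bind_apply ((Set.finite_Iic N).isCompact_biUnion
      fun n _ => hKc n).measurableSet.compl hΛm.aemeasurable]
    refine (lintegral_congr fun z => ?_).trans lintegral_zero
    exact measure_mono_null (compl_subset_compl.2
      (subset_biUnion_of_mem (u := K) (mem_Iic.2 (hπN z)))) (hΛK _)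
  · rcases le_or_gt ‖z - w‖ (8 * s) with h | h
    · -- near the diagonal only the uniform bound on the potentials at scale `s` is needed
      have hs8 : logKer s ≤ logKer ‖z - w‖ + ENNReal.ofReal (Real.log 8) :=
        (logKer_anti (by positivity) (by linarith)).trans (logKer_div_eight_le (norm_nonneg _))
      calc H (π z, π w) ≤ ∫⁻ _a, 2 * (logKer s + C) ∂(Λ (π z)) := by
            refine lintegral_mono_ae ((hKae _).mono fun a ha => ?_)
            refine le_trans (lintegral_mono_ae ((hKae _).mono fun b hb => ?_))
              (hΛpot (π w) a)
            rw [norm_sub_rev]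
            exact greenFnE_le_logKer (hD (subset_closure (hKE _ ha)))
              (hD (subset_closure (hKE _ hb)))
        _ = 2 * (logKer s + C) := by simp
        _ ≤ _ := by gcongr
    · refine (hsecond z hz w hw (logKer ‖z - w‖ + ENNReal.ofReal (Real.log 8))
        fun a ha b hb haz hbw => ?_).trans ?_
      · refine (greenFnE_le_logKer (hD (subset_closure ha)) (hD (subset_closure hb))).trans
          (le_trans (logKer_anti (by positivity) ?_) (logKer_div_eight_le (norm_nonneg _)))
        have h1 := norm_sub_le_norm_sub_add_norm_sub z a w
        have h2 := norm_sub_le_norm_sub_add_norm_sub a b w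
        rw [norm_sub_rev z a] at h1
        linarith
      · rw [two_mul]
        exact le_self_add.trans le_self_add

/-! ### Comparison of the energies -/

theorem greenV_anti {A B : Set ℂ} (h : A ⊆ B) : greenV B ≤ greenV A :=
  iInf_mono fun _ => iInf_mono fun _ => iInf_mono' fun ⟨K, hK, hKc, hμ⟩ =>
    ⟨⟨K, hK.trans h, hKc, hμ⟩, le_rfl⟩

/-- A probability measure on the closure of `E` has energy at least `greenV E`: as the
scale tends to `0`, the smearings of `μ` into `E` have energies whose upper limit is at most the
energy of `μ`, by the reverse Fatou lemma with a multiple of the Green function plus a constant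
as dominating function. -/
theorem greenV_le_greenEnergy {E : Set ℂ} (hE : MeasurableSet E) (hconn : IsPreconnected E)
    (hnt : E.Nontrivial) (hD : closure E ⊆ unitDisk) (μ : Measure ℂ) [IsProbabilityMeasure μ]
    (hμ : μ (closure E)ᶜ = 0) : greenV E ≤ greenEnergy μ := by
  by_cases htop : greenEnergy μ = ⊤
  · simp [htop]
  have hcomp : IsCompact (closure E) := by
    refine Metric.isCompact_of_isClosed_isBounded isClosed_closure
      ((Metric.isBounded_ball (x := (0 : ℂ)) (r := 1)).subset fun z hz => ?_)
    exact mem_ball_zero_iff.2 (hD hz)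
  obtain ⟨ρ, hρ, hρE⟩ : ∃ ρ < 1, ∀ z ∈ closure E, ‖z‖ ≤ ρ := by
    obtain ⟨z₀, hz₀, hmax⟩ := hcomp.exists_isMaxOn hnt.nonempty.closure
      continuous_norm.continuousOn
    exact ⟨‖z₀‖, hD hz₀, fun z hz => hmax hz⟩
  obtain ⟨x, hx, y, hy, hxy⟩ := hnt
  have hd : 0 < ‖x - y‖ := norm_pos_iff.2 (sub_ne_zero.2 hxy)
  obtain ⟨C, hCtop, hC⟩ := exists_lintegral_logKer_le
  let s : ℕ → ℝ := fun n => ‖x - y‖ / 2 / (n + 1)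
  have hs : ∀ n, 0 < s n := fun n => by positivity
  have hs_lim : Tendsto s atTop (nhds 0) := by
    simpa [s, div_eq_mul_inv] using
      (tendsto_one_div_add_atTop_nhds_zero_nat (𝕜 := ℝ)).const_mul (‖x - y‖ / 2)
  have hv : ∀ n, ∀ e ∈ closure E, ∃ v ∈ E, s n ≤ ‖v - e‖ := by
    intro n e _
    have hle : s n ≤ ‖x - y‖ / 2 := div_le_self (by positivity) (by simp)
    by_contra! hcon
    have h1 := hcon x hx
    have h2 := hcon y hy
    have h3 := norm_sub_le_norm_sub_add_norm_sub x e y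
    rw [norm_sub_rev e y] at h3
    linarith
  choose F hFm hFV hF using fun n =>
    exists_smearing hE hconn ⟨x, hx⟩ hD hcomp (hs n) (hC (s n) (hs n)) (hv n) μ
  have henergy : greenEnergy μ = ∫⁻ p, greenFnE p.1 p.2 ∂(μ.prod μ) :=
    (lintegral_prod _ measurable_greenFnE.aemeasurable).symm
  have hμae : ∀ᵐ z ∂μ, z ∈ closure E := mem_ae_iff.2 hμ
  have hμμ : ∀ᵐ p ∂(μ.prod μ), p.1 ∈ closure E ∧ p.2 ∈ closure E :=
    (Measure.quasiMeasurePreserving_fst.ae hμae).and (Measure.quasiMeasurePreserving_snd.ae hμae)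
  let D : ℝ≥0∞ := ENNReal.ofReal (Real.log (2 / (1 - ρ))) + ENNReal.ofReal (Real.log 8) + C
  have hDtop : D ≠ ⊤ := by simp [D, hCtop]
  have hbound : ∀ n, F n ≤ᵐ[μ.prod μ] fun p => 2 * (greenFnE p.1 p.2 + D) := by
    intro n
    filter_upwards [hμμ] with p hp
    refine ((hF n p.1 hp.1 p.2 hp.2).1).trans ?_
    simp only [D, ← add_assoc]
    gcongr
    exact logKer_le_greenFnE_add hρ (hρE _ hp.1) (hρE _ hp.2)
  have hfin : ∫⁻ p, 2 * (greenFnE p.1 p.2 + D) ∂(μ.prod μ) ≠ ⊤ := by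
    rw [lintegral_const_mul _ (by exact measurable_greenFnE.add measurable_const),
      lintegral_add_right _ measurable_const, ← henergy]
    simp [ENNReal.mul_eq_top, htop, hDtop]
  have hlim : ∀ᵐ p ∂(μ.prod μ), limsup (fun n => F n p) atTop ≤ greenFnE p.1 p.2 := by
    filter_upwards [hμμ] with p hp
    refine le_of_forall_gt_imp_ge_of_dense fun c hc => ?_
    obtain ⟨ε, hε, hball⟩ := Metric.eventually_nhds_iff.1
      (eventually_greenFnE_lt (hD hp.1) (hD hp.2) hc)
    refine limsup_le_of_le (by isBoundedDefault) ?_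
    filter_upwards [hs_lim.eventually_lt_const (half_pos hε)] with n hn
    refine (hF n p.1 hp.1 p.2 hp.2).2 c fun a _ b _ ha hb => ?_
    refine (hball (y := (a, b)) ?_).le
    rw [Prod.dist_eq, dist_eq_norm, dist_eq_norm]
    exact max_lt (by linarith) (by linarith)
  calc greenV E ≤ limsup (fun n => ∫⁻ p, F n p ∂(μ.prod μ)) atTop :=
        le_limsup_of_frequently_le (Frequently.of_forall hFV) (by isBoundedDefault)
    _ ≤ ∫⁻ p, limsup (fun n => F n p) atTop ∂(μ.prod μ) :=
        limsup_lintegral_le _ hFm hbound hfin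
    _ ≤ ∫⁻ p, greenFnE p.1 p.2 ∂(μ.prod μ) := lintegral_mono_ae hlim
    _ = greenEnergy μ := henergy.symm

/-- For every connected Borel subset `E` of the unit disk whose closure is
contained in the disk, `capa(E) = capa(closure E)`. -/
theorem greenCapa_closure_eq
    (E : Set ℂ) (hE_meas : MeasurableSet E) (hE_conn : IsConnected E)
    (hE_cl : closure E ⊆ unitDisk) :
    greenCapa E = greenCapa (closure E) := by
  rcases E.subsingleton_or_nontrivial with hsub | hnt
  · rw [hsub.isClosed.closure_eq]
  suffices h : greenV E = greenV (closure E) by rw [greenCapa, greenCapa, h]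
  refine le_antisymm ?_ (greenV_anti subset_closure)
  refine le_iInf fun μ => le_iInf fun hμ => le_iInf fun ⟨K, hK, _, hμK⟩ => ?_
  exact greenV_le_greenEnergy hE_meas hE_conn.isPreconnected hnt hE_cl μ
    (measure_mono_null (compl_subset_compl.2 hK) hμK)

end
end
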